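/- Assume the Gaussian-basis model: fix v ∈ ℝ^N, let Y ∈ ℝ^{N×n} have first column v and remaining n−1 columns i.i.d. N(0, (1/N) I_N), let Q ∈ ℝ^{n×n} be an arbitrary orthogonal matrix, and observe Ỹ = YQ. Let ỹ_jᵀ be the j-th row of Ỹ, define M̃ := Σ_{i=1}^N (‖ỹ_i‖² − (n−1)/N) ỹ_i ỹ_iᵀ − (3/N) I_n, and let ũ be the unit leading eigenvector of M̃. There exist universal constants c > 0 and C > 0 such that: for any δ ∈ (0,1), if N ≥ log⁷(N/δ) and η/|‖v‖₄⁴ − 3/N| ≤ c (with η as in the spectral-norm proposition), then with probability at least 1−δ there is a single choice of sign s ∈ {±1} such that for all j ∈ [N], |s·ỹ_jᵀũ − v_j| ≤ (C·η/|‖v‖₄⁴ − 3/N|)·(|v_j| + √(log(N/δ))/√N). -/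

import Mathlib

open MeasureTheory ProbabilityTheory Matrix

/-- Euclidean norm of a vector in `ℝ^k`. -/
noncomputable def eucNorm {k : ℕ} (v : Fin k → ℝ) : ℝ := Real.sqrt (∑ i, (v i) ^ 2)

/-- ℓ_p norm of a vector in `ℝ^k`. -/
noncomputable def lpNorm {k : ℕ} (p : ℝ) (v : Fin k → ℝ) : ℝ := (∑ i, |v i| ^ p) ^ (1 / p)

/-- Supremum (ℓ_∞) norm of a vector in `ℝ^k`. -/
noncomputable def supNorm {k : ℕ} (v : Fin k → ℝ) : ℝ := ⨆ i, |v i|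

/-- The Gaussian measure `N(0, σ2 · I_k)` on `ℝ^k`. -/
noncomputable def gaussVec (k : ℕ) (σ2 : NNReal) : Measure (Fin k → ℝ) :=
  Measure.pi fun _ => gaussianReal 0 σ2

instance (k : ℕ) (σ2 : NNReal) : IsProbabilityMeasure (gaussVec k σ2) := by
  unfold gaussVec; infer_instance

/-- The law of `N` i.i.d. samples from `N(0, σ2 · I_k)`. -/
noncomputable def iidGaussVec (N k : ℕ) (σ2 : NNReal) : Measure (Fin N → Fin k → ℝ) :=
  Measure.pi fun _ => gaussVec k σ2

/-- Concatenation `(a, bᵀ)ᵀ ∈ ℝ^n` of a scalar `a` with a vector `b ∈ ℝ^{n-1}`. -/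
noncomputable def rowCat {n : ℕ} (a : ℝ) (b : Fin (n - 1) → ℝ) : Fin n → ℝ :=
  fun j => if h : (j : ℕ) = 0 then a else b ⟨(j : ℕ) - 1, by have := j.isLt; omega⟩

/-- The `N × n` matrix whose rows are `y_iᵀ = (v_i, b_iᵀ)`, i.e. whose first column is `v`
and whose remaining `n - 1` columns are given by `B`. -/
noncomputable def gaussBasis {N n : ℕ} (v : Fin N → ℝ) (B : Fin N → Fin (n - 1) → ℝ) :
    Matrix (Fin N) (Fin n) ℝ :=
  Matrix.of fun i => rowCat (v i) (B i)

/-- The matrix `M(Y) = ∑_i (‖y_i‖² - (n-1)/N) y_i y_iᵀ - (3/N) I_n` built from the rows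
`y_iᵀ` of `Y`. -/
noncomputable def specMat {N n : ℕ} (Y : Matrix (Fin N) (Fin n) ℝ) :
    Matrix (Fin n) (Fin n) ℝ :=
  (∑ i, ((∑ j, (Y i j) ^ 2) - ((n : ℝ) - 1) / N) • Matrix.vecMulVec (Y i) (Y i))
    - ((3 : ℝ) / N) • (1 : Matrix (Fin n) (Fin n) ℝ)

/-- `u` is a unit leading eigenvector of the (symmetric) matrix `M`: a unit eigenvector
whose eigenvalue has the largest absolute value among all eigenvalues of `M`. -/
def IsLeadingEigen {n : ℕ} (M : Matrix (Fin n) (Fin n) ℝ) (u : Fin n → ℝ) : Prop :=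
  eucNorm u = 1 ∧ ∃ μ : ℝ, M.mulVec u = μ • u ∧
    ∀ μ' : ℝ, (∃ w : Fin n → ℝ, w ≠ 0 ∧ M.mulVec w = μ' • w) → |μ'| ≤ |μ|

/-- The quantity `η = η(N, n, v, δ)` with universal constant `C`. -/
noncomputable def etaBound (C : ℝ) (N n : ℕ) (v : Fin N → ℝ) (δ : ℝ) : ℝ :=
  C * ((eucNorm v + 1) * n * Real.sqrt (Real.log (N / δ)) / (N : ℝ) ^ ((3 : ℝ) / 2)
    + lpNorm 4 v ^ 2 * Real.sqrt (n * Real.log (N / δ)) / N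
    + lpNorm 6 v ^ 3 * (Real.sqrt n + Real.sqrt (Real.log (N / δ))) / Real.sqrt N
    + supNorm v ^ 2 * (n * Real.log (N / δ) + (Real.log (N / δ)) ^ 2) / N
    + (n * Real.log (N / δ)) ^ ((3 : ℝ) / 2) / (N : ℝ) ^ 2
    + |eucNorm v ^ 2 - 1| / N)

namespace GaussBasis

/-! ### Exponential moments and Chernoff bounds -/

lemma exp_le_one_add_add (z : ℝ) : Real.exp z ≤ 1 + z + z ^ 2 * Real.exp |z| := by
  have h := Complex.norm_exp_sub_sum_le_norm_mul_exp (z : ℂ) 2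
  rw [← Complex.ofReal_exp] at h
  simp only [Finset.sum_range_succ, Finset.sum_range_zero, pow_zero, Nat.factorial, pow_one] at h
  norm_num at h
  have h2 : ‖((Real.exp z - (1 + z) : ℝ) : ℂ)‖ ≤ z ^ 2 * Real.exp |z| := by
    push_cast; exact_mod_cast h
  rw [Complex.norm_real] at h2
  have := (le_abs_self _).trans h2
  linarith

lemma exp_le_add_exp_sq (z : ℝ) : Real.exp z ≤ z + Real.exp (z ^ 2) := by
  rcases le_or_gt |z| 1 with h | h
  · have h1 := (abs_le.1 (Real.abs_exp_sub_one_sub_id_le h)).2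
    have h2 := Real.add_one_le_exp (z ^ 2)
    linarith
  · rcases lt_abs.1 h with h | h
    · have : Real.exp z ≤ Real.exp (z ^ 2) := Real.exp_le_exp.2 (by nlinarith)
      linarith
    · have h1 : Real.exp z ≤ 1 := Real.exp_le_one_iff.2 (by linarith)
      have h2 := Real.add_one_le_exp (z ^ 2)
      nlinarith

/-- The exponential moment of `f` at `θ` exists and is at most `exp (θ² V)`. -/
def MgfLe {α : Type*} [MeasurableSpace α] (μ : Measure α) (f : α → ℝ) (θ V : ℝ) : Prop :=
  Integrable (fun x => Real.exp (θ * f x)) μ ∧ ∫ x, Real.exp (θ * f x) ∂μ ≤ Real.exp (θ ^ 2 * V)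

section
variable {α : Type*} [MeasurableSpace α] {μ : Measure α}

lemma MgfLe.mono {f : α → ℝ} {θ V V' : ℝ} (h : MgfLe μ f θ V) (hV : V ≤ V') :
    MgfLe μ f θ V' :=
  ⟨h.1, h.2.trans (Real.exp_le_exp.2 (mul_le_mul_of_nonneg_left hV (sq_nonneg θ)))⟩

lemma MgfLe.const_mul {f : α → ℝ} {c θ V : ℝ} (h : MgfLe μ f (θ * c) V) :
    MgfLe μ (fun x => c * f x) θ (c ^ 2 * V) := by
  simpa only [MgfLe, mul_assoc, mul_pow] using h

lemma integrable_of_sq_mul_exp_le {Z G : α → ℝ} {θ : ℝ} [IsProbabilityMeasure μ]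
    (hZ : Measurable Z) (hG : Integrable G μ)
    (hle : ∀ x, Z x ^ 2 * Real.exp |θ * Z x| ≤ G x) : Integrable Z μ := by
  refine ((integrable_const (1 : ℝ)).add hG).mono' hZ.aestronglyMeasurable
    (Filter.Eventually.of_forall fun x => ?_)
  have h1 : Z x ^ 2 ≤ G x := le_trans (le_mul_of_one_le_right (sq_nonneg _)
    (Real.one_le_exp (abs_nonneg _))) (hle x)
  simp only [Real.norm_eq_abs, Pi.add_apply]
  have : |Z x| ≤ 1 + Z x ^ 2 := by
    rw [← sq_abs]; nlinarith [sq_nonneg (|Z x| - 1), abs_nonneg (Z x)]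
  linarith

/-- Bernstein's bound on the centred exponential moment. -/
lemma mgfLe_sub_integral {Z G : α → ℝ} {θ V : ℝ} [IsProbabilityMeasure μ]
    (hZ : Measurable Z) (hG : Integrable G μ)
    (hle : ∀ x, Z x ^ 2 * Real.exp |θ * Z x| ≤ G x) (hV : ∫ x, G x ∂μ ≤ V) :
    MgfLe μ (fun x => Z x - ∫ y, Z y ∂μ) θ V := by
  have hZi := integrable_of_sq_mul_exp_le hZ hG hle
  set m := ∫ y, Z y ∂μ
  have key : ∀ x, Real.exp (θ * Z x) ≤ 1 + θ * Z x + θ ^ 2 * G x := fun x => by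
    have h1 := exp_le_one_add_add (θ * Z x)
    have h2 := mul_le_mul_of_nonneg_left (hle x) (sq_nonneg θ)
    nlinarith
  have hbi : Integrable (fun x => 1 + θ * Z x + θ ^ 2 * G x) μ :=
    ((integrable_const 1).add (hZi.const_mul θ)).add (hG.const_mul _)
  have hei : Integrable (fun x => Real.exp (θ * Z x)) μ := by
    refine hbi.mono' (by fun_prop) (Filter.Eventually.of_forall fun x => ?_)
    simpa [Real.norm_eq_abs, Real.abs_exp] using key x
  have hrw : ∀ x, Real.exp (θ * (Z x - m)) = Real.exp (-(θ * m)) * Real.exp (θ * Z x) := by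
    intro x; rw [← Real.exp_add]; ring_nf
  refine ⟨by simpa only [hrw] using hei.const_mul _, ?_⟩
  simp only [hrw]
  rw [integral_const_mul]
  have h1 : ∫ x, Real.exp (θ * Z x) ∂μ ≤ 1 + θ * m + θ ^ 2 * V := by
    calc _ ≤ ∫ x, (1 + θ * Z x + θ ^ 2 * G x) ∂μ := integral_mono hei hbi key
      _ = 1 + θ * m + θ ^ 2 * ∫ x, G x ∂μ := by
        have hi : Integrable (fun x => 1 + θ * Z x) μ :=
          (integrable_const 1).add (hZi.const_mul θ)
        rw [integral_add hi (hG.const_mul _),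
          integral_add (integrable_const 1) (hZi.const_mul θ), integral_const_mul,
          integral_const_mul]
        simp [m]
      _ ≤ _ := by gcongr
  have h2 : 1 + θ * m + θ ^ 2 * V ≤ Real.exp (θ * m + θ ^ 2 * V) := by
    linarith [Real.add_one_le_exp (θ * m + θ ^ 2 * V)]
  calc _ ≤ Real.exp (-(θ * m)) * Real.exp (θ * m + θ ^ 2 * V) := by gcongr; linarith
    _ = _ := by rw [← Real.exp_add]; ring_nf

/-- Exponential moments of sums of independent variables. -/
lemma mgfLe_sum {ι : Type*} [Fintype ι] [SigmaFinite μ] {f : ι → α → ℝ} {θ : ℝ} {V : ι → ℝ}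
    (h : ∀ i, MgfLe μ (f i) θ (V i)) :
    MgfLe (Measure.pi fun _ : ι => μ) (fun x => ∑ i, f i (x i)) θ (∑ i, V i) := by
  have hrw : ∀ x : ι → α, Real.exp (θ * ∑ i, f i (x i)) = ∏ i, Real.exp (θ * f i (x i)) := by
    intro x; rw [Finset.mul_sum, Real.exp_sum]
  refine ⟨by simpa only [hrw] using
    Integrable.fintype_prod (f := fun i y => Real.exp (θ * f i y)) fun i => (h i).1, ?_⟩
  simp only [hrw]
  rw [integral_fintype_prod_eq_prod (f := fun i y => Real.exp (θ * f i y)), Finset.mul_sum,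
    Real.exp_sum]
  exact Finset.prod_le_prod (fun i _ => integral_nonneg fun x => (Real.exp_pos _).le)
    fun i _ => (h i).2

lemma measure_abs_ge_le [IsProbabilityMeasure μ] {f : α → ℝ} {t p V : ℝ} (ht : 0 < t)
    (hp : 0 < p) (hV : 4 * p * V ≤ t ^ 2) (h1 : MgfLe μ f (2 * p / t) V)
    (h2 : MgfLe μ f (-(2 * p / t)) V) :
    μ {x | t ≤ |f x|} ≤ ENNReal.ofReal (2 * Real.exp (-p)) := by
  have hθ : 0 < 2 * p / t := by positivity
  have hexp : -(2 * p / t) * t + (2 * p / t) ^ 2 * V ≤ -p := by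
    have e1 : -(2 * p / t) * t = -(2 * p) := by field_simp
    have e2 : (2 * p / t) ^ 2 * V = p * (4 * p * V / t ^ 2) := by field_simp; ring
    have e3 : 4 * p * V / t ^ 2 ≤ 1 := by rw [div_le_one (by positivity)]; exact hV
    rw [e1, e2]
    nlinarith
  have a1 : μ.real {x | t ≤ f x} ≤ Real.exp (-p) := by
    refine (measure_ge_le_exp_mul_mgf t hθ.le h1.1).trans ?_
    calc _ ≤ Real.exp (-(2 * p / t) * t) * Real.exp ((2 * p / t) ^ 2 * V) := by
          gcongr; exact h1.2
      _ ≤ _ := by rw [← Real.exp_add]; exact Real.exp_le_exp.2 hexp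
  have a2 : μ.real {x | f x ≤ -t} ≤ Real.exp (-p) := by
    refine (measure_le_le_exp_mul_mgf (-t) (t := -(2 * p / t)) (by linarith) h2.1).trans ?_
    calc _ ≤ Real.exp (-(2 * p / t) * t) * Real.exp ((2 * p / t) ^ 2 * V) := by
          have e : -(-(2 * p / t)) * -t = -(2 * p / t) * t := by ring
          rw [e]
          refine mul_le_mul_of_nonneg_left ?_ (Real.exp_pos _).le
          exact h2.2.trans (le_of_eq (by ring_nf))
      _ ≤ _ := by rw [← Real.exp_add]; exact Real.exp_le_exp.2 hexp
  have hsub : {x | t ≤ |f x|} ⊆ {x | t ≤ f x} ∪ {x | f x ≤ -t} := by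
    intro x hx
    rcases le_abs.1 (show t ≤ |f x| from hx) with h | h
    · exact Or.inl h
    · exact Or.inr (by simp only [Set.mem_ofPred_eq]; linarith)
  refine (measure_mono hsub).trans ((measure_union_le _ _).trans ?_)
  rw [two_mul, ENNReal.ofReal_add (Real.exp_pos _).le (Real.exp_pos _).le]
  refine add_le_add ?_ ?_
  · rw [← ENNReal.ofReal_toReal (measure_ne_top μ _)]; exact ENNReal.ofReal_le_ofReal a1
  · rw [← ENNReal.ofReal_toReal (measure_ne_top μ _)]; exact ENNReal.ofReal_le_ofReal a2

/-- Chernoff bound for a sum of independent variables. -/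
lemma measure_sum_abs_ge_le {ι : Type*} [Fintype ι] [IsProbabilityMeasure μ] {f : ι → α → ℝ}
    {V : ι → ℝ} {t p : ℝ} (ht : 0 < t) (hp : 0 < p) (hV : 4 * p * ∑ i, V i ≤ t ^ 2)
    (h : ∀ i θ, |θ| = 2 * p / t → MgfLe μ (f i) θ (V i)) :
    (Measure.pi fun _ : ι => μ) {x | t ≤ |∑ i, f i (x i)|} ≤
      ENNReal.ofReal (2 * Real.exp (-p)) := by
  have hθ : 0 < 2 * p / t := by positivity
  exact measure_abs_ge_le ht hp hV (mgfLe_sum fun i => h i _ (abs_of_pos hθ))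
    (mgfLe_sum fun i => h i _ (by rw [abs_neg, abs_of_pos hθ]))

end

/-! ### A single Gaussian row -/

lemma integral_exp_sq_gaussianReal_le {v s : NNReal} (hs : 0 < s) (hvs : v ≤ s) :
    Integrable (fun x => Real.exp (x ^ 2 / (4 * s))) (gaussianReal 0 v) ∧
      ∫ x, Real.exp (x ^ 2 / (4 * s)) ∂(gaussianReal 0 v) ≤ 2 := by
  have hs' : (0 : ℝ) < s := by exact_mod_cast hs
  rcases eq_or_ne v 0 with rfl | hv
  · rw [gaussianReal_zero_var]
    refine ⟨integrable_dirac (by simp), ?_⟩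
    simp
  have hv' : (0 : ℝ) < v := by exact_mod_cast pos_iff_ne_zero.2 hv
  have hvs' : (v : ℝ) ≤ s := by exact_mod_cast hvs
  have hb : (0 : ℝ) < 1 / (4 * v) := by positivity
  have key : ∀ x : ℝ, gaussianPDFReal 0 v x * Real.exp (x ^ 2 / (4 * v)) =
      (√(2 * Real.pi * v))⁻¹ * Real.exp (-(1 / (4 * v)) * x ^ 2) := by
    intro x
    rw [gaussianPDFReal, mul_assoc, ← Real.exp_add]
    congr 2
    field_simp
    ring
  have hint : Integrable (fun x => Real.exp (x ^ 2 / (4 * v))) (gaussianReal 0 v) := by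
    rw [gaussianReal_of_var_ne_zero _ hv,
      integrable_withDensity_iff_integrable_smul' (measurable_gaussianPDF _ _)
        (Filter.Eventually.of_forall fun _ => gaussianPDF_lt_top)]
    simp only [toReal_gaussianPDF, smul_eq_mul, key]
    exact (integrable_exp_neg_mul_sq hb).const_mul _
  have hval : ∫ x, Real.exp (x ^ 2 / (4 * v)) ∂(gaussianReal 0 v) ≤ 2 := by
    rw [integral_gaussianReal_eq_integral_smul hv]
    simp only [smul_eq_mul, key]
    rw [integral_const_mul, integral_gaussian, ← Real.sqrt_inv,
      ← Real.sqrt_mul (by positivity), Real.sqrt_le_left (by norm_num)]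
    have : (2 * Real.pi * (v : ℝ))⁻¹ * (Real.pi / (1 / (4 * v))) = 2 := by
      field_simp; norm_num
    rw [this]; norm_num
  have hle : ∀ x : ℝ, Real.exp (x ^ 2 / (4 * s)) ≤ Real.exp (x ^ 2 / (4 * v)) := by
    intro x; gcongr
  have hint' : Integrable (fun x => Real.exp (x ^ 2 / (4 * s))) (gaussianReal 0 v) := by
    refine hint.mono' (by fun_prop) (Filter.Eventually.of_forall fun x => ?_)
    rw [Real.norm_eq_abs, Real.abs_exp]
    exact hle x
  exact ⟨hint', (integral_mono hint' hint hle).trans hval⟩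

section
variable {d : ℕ} {s : NNReal}

lemma gaussVec_map_dotProduct (x : Fin d → ℝ) :
    (gaussVec d s).map (fun g => g ⬝ᵥ x) = gaussianReal 0 (s * ∑ k, Real.toNNReal (x k ^ 2)) := by
  have hm : Measurable fun g : Fin d → ℝ => g ⬝ᵥ x := by unfold dotProduct; fun_prop
  refine Measure.ext_of_charFun ?_
  ext t
  rw [charFun_gaussianReal, charFun_apply_real, integral_map hm.aemeasurable (by fun_prop)]
  have h1 : ∀ g : Fin d → ℝ, Complex.exp (t * ((g ⬝ᵥ x : ℝ) : ℂ) * Complex.I) =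
      ∏ k, Complex.exp (((t * x k : ℝ) : ℂ) * g k * Complex.I) := by
    intro g
    rw [← Complex.exp_sum]
    congr 1
    simp only [dotProduct, Complex.ofReal_sum, Finset.mul_sum, Finset.sum_mul]
    refine Finset.sum_congr rfl fun k _ => ?_
    push_cast; ring
  simp only [h1]
  rw [gaussVec, integral_fintype_prod_eq_prod
    (f := fun k (y : ℝ) => Complex.exp (((t * x k : ℝ) : ℂ) * y * Complex.I))]
  have h2 : ∀ k, ∫ y : ℝ, Complex.exp (((t * x k : ℝ) : ℂ) * y * Complex.I) ∂(gaussianReal 0 s) =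
      Complex.exp (- (s * ((t * x k : ℝ) : ℂ) ^ 2 / 2)) := by
    intro k
    rw [← charFun_apply_real, charFun_gaussianReal]
    simp
  simp only [h2]
  rw [← Complex.exp_sum]
  congr 1
  have h3 : ((s * ∑ k, Real.toNNReal (x k ^ 2) : NNReal) : ℂ) = s * ∑ k, (x k : ℂ) ^ 2 := by
    push_cast
    congr 1
    refine Finset.sum_congr rfl fun k _ => ?_
    have : ((Real.toNNReal (x k ^ 2) : NNReal) : ℝ) = x k ^ 2 := Real.coe_toNNReal _ (sq_nonneg _)
    exact_mod_cast congrArg (fun r : ℝ => (r : ℂ)) this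
  rw [h3]
  push_cast
  rw [Finset.sum_neg_distrib, Finset.mul_sum, Finset.sum_mul, Finset.sum_div]
  simp only [mul_zero, zero_mul, zero_sub]
  congr 1
  refine Finset.sum_congr rfl fun k _ => ?_
  ring

lemma coe_variance (x : Fin d → ℝ) :
    ((s * ∑ k, Real.toNNReal (x k ^ 2) : NNReal) : ℝ) = s * ∑ k, x k ^ 2 := by
  push_cast
  congr 1
  exact Finset.sum_congr rfl fun k _ => Real.coe_toNNReal _ (sq_nonneg _)

lemma measurable_dotProduct_right (x : Fin d → ℝ) : Measurable fun g : Fin d → ℝ => g ⬝ᵥ x := by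
  unfold dotProduct; fun_prop

lemma integral_exp_sq_dotProduct_le (hs : 0 < s) {x : Fin d → ℝ} (hx : ∑ k, x k ^ 2 ≤ 1) :
    Integrable (fun g => Real.exp ((g ⬝ᵥ x) ^ 2 / (4 * s))) (gaussVec d s) ∧
      ∫ g, Real.exp ((g ⬝ᵥ x) ^ 2 / (4 * s)) ∂(gaussVec d s) ≤ 2 := by
  have hv : s * ∑ k, Real.toNNReal (x k ^ 2) ≤ s := by
    rw [← NNReal.coe_le_coe, coe_variance]
    exact mul_le_of_le_one_right s.2 hx
  obtain ⟨h1, h2⟩ := integral_exp_sq_gaussianReal_le hs hv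
  have hm := (measurable_dotProduct_right x).aemeasurable (μ := gaussVec d s)
  rw [← gaussVec_map_dotProduct] at h1 h2
  rw [integral_map hm (by fun_prop)] at h2
  exact ⟨h1.comp_aemeasurable hm, h2⟩

lemma mgfLe_dotProduct {x : Fin d → ℝ} (hx : ∑ k, x k ^ 2 ≤ 1) (θ : ℝ) :
    MgfLe (gaussVec d s) (fun g => g ⬝ᵥ x) θ (s / 2) := by
  have hm := (measurable_dotProduct_right x).aemeasurable (μ := gaussVec d s)
  refine ⟨?_, ?_⟩
  · have := integrable_exp_mul_gaussianReal (μ := 0) (v := s * ∑ k, Real.toNNReal (x k ^ 2)) θ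
    rw [← gaussVec_map_dotProduct] at this
    exact this.comp_aemeasurable hm
  · have := mgf_gaussianReal (gaussVec_map_dotProduct (s := s) x) θ
    rw [mgf] at this
    rw [this, coe_variance]
    refine Real.exp_le_exp.2 ?_
    have : (s : ℝ) * ∑ k, x k ^ 2 ≤ s := mul_le_of_le_one_right s.2 hx
    nlinarith [sq_nonneg θ]

lemma integral_dotProduct_sq (x : Fin d → ℝ) :
    ∫ g, (g ⬝ᵥ x) ^ 2 ∂(gaussVec d s) = s * ∑ k, x k ^ 2 := by
  have hm := (measurable_dotProduct_right x).aemeasurable (μ := gaussVec d s)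
  have h := variance_fun_id_gaussianReal (μ := 0) (v := s * ∑ k, Real.toNNReal (x k ^ 2))
  rw [variance_eq_integral (by fun_prop), integral_id_gaussianReal, coe_variance] at h
  rw [← h, ← gaussVec_map_dotProduct, integral_map hm (by fun_prop)]
  simp

end

/-! ### Products of a sub-Gaussian variable with a variable of controlled fourth moment -/

/-- `h` is measurable with `E exp (h² / (4 s)) ≤ 2`. -/
structure SubGauss {α : Type*} [MeasurableSpace α] (μ : Measure α) (h : α → ℝ) (s : ℝ) : Prop where
  pos : 0 < s
  measurable : Measurable h
  integrable : Integrable (fun x => Real.exp (h x ^ 2 / (4 * s))) μ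
  integral_le : ∫ x, Real.exp (h x ^ 2 / (4 * s)) ∂μ ≤ 2

lemma sq_le_two_mul_exp {y : ℝ} (hy : 0 ≤ y) : y ^ 2 ≤ 2 * Real.exp y := by
  have := Real.pow_div_factorial_le_exp y hy 2
  norm_num [Nat.factorial] at this
  linarith

lemma pow_four_le_mul_exp {y : ℝ} (hy : 0 ≤ y) : y ^ 4 ≤ 24 * Real.exp y := by
  have := Real.pow_div_factorial_le_exp y hy 4
  norm_num [Nat.factorial] at this
  linarith

lemma pow_four_mul_exp_le {s : ℝ} (hs : 0 < s) (h : ℝ) :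
    h ^ 4 * Real.exp (h ^ 2 / (8 * s)) ≤ 128 * s ^ 2 * Real.exp (h ^ 2 / (4 * s)) := by
  have h1 := sq_le_two_mul_exp (y := h ^ 2 / (8 * s)) (by positivity)
  have h2 : h ^ 4 = 64 * s ^ 2 * (h ^ 2 / (8 * s)) ^ 2 := by field_simp; norm_num
  have h3 : Real.exp (h ^ 2 / (4 * s)) = Real.exp (h ^ 2 / (8 * s)) * Real.exp (h ^ 2 / (8 * s)) := by
    rw [← Real.exp_add]; congr 1; field_simp; ring
  rw [h2, h3]
  have := mul_le_mul_of_nonneg_left h1 (show 0 ≤ 64 * s ^ 2 by positivity)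
  have := mul_le_mul_of_nonneg_right this (Real.exp_pos (h ^ 2 / (8 * s))).le
  nlinarith

lemma pow_eight_mul_exp_le {s : ℝ} (hs : 0 < s) (h : ℝ) :
    h ^ 8 * Real.exp (h ^ 2 / (8 * s)) ≤ 98304 * s ^ 4 * Real.exp (h ^ 2 / (4 * s)) := by
  have h1 := pow_four_le_mul_exp (y := h ^ 2 / (8 * s)) (by positivity)
  have h2 : h ^ 8 = 4096 * s ^ 4 * (h ^ 2 / (8 * s)) ^ 4 := by field_simp; norm_num
  have h3 : Real.exp (h ^ 2 / (4 * s)) = Real.exp (h ^ 2 / (8 * s)) * Real.exp (h ^ 2 / (8 * s)) := by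
    rw [← Real.exp_add]; congr 1; field_simp; ring
  rw [h2, h3]
  have := mul_le_mul_of_nonneg_left h1 (show 0 ≤ 4096 * s ^ 4 by positivity)
  have := mul_le_mul_of_nonneg_right this (Real.exp_pos (h ^ 2 / (8 * s))).le
  nlinarith

section
variable {α : Type*} [MeasurableSpace α] {μ : Measure α} [IsProbabilityMeasure μ]
  {h ρ r : α → ℝ} {s τ m θ : ℝ}

lemma SubGauss.mgfLe_sq_sub (H : SubGauss μ h s) (hθ : |θ| * s ≤ 1 / 8) :
    MgfLe μ (fun x => h x ^ 2 - ∫ y, h y ^ 2 ∂μ) θ (256 * s ^ 2) := by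
  have hs := H.pos
  have hm := H.measurable
  refine mgfLe_sub_integral (Z := fun x => h x ^ 2)
    (G := fun x => 128 * s ^ 2 * Real.exp (h x ^ 2 / (4 * s))) (by fun_prop)
    (H.integrable.const_mul _) (fun x => ?_) ?_
  · refine le_trans ?_ (pow_four_mul_exp_le hs (h x))
    have : |θ * h x ^ 2| ≤ h x ^ 2 / (8 * s) := by
      rw [abs_mul, abs_of_nonneg (sq_nonneg (h x)), le_div_iff₀ (by positivity)]
      nlinarith [sq_nonneg (h x)]
    calc _ = h x ^ 4 * Real.exp |θ * h x ^ 2| := by ring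
      _ ≤ _ := by gcongr
  · rw [integral_const_mul]
    nlinarith [H.integral_le, sq_nonneg s]

lemma SubGauss.mgfLe_mul (H : SubGauss μ h s) (hρ : Measurable ρ) (hτ : ∀ x, |ρ x| ≤ τ)
    (h0 : ∫ x, ρ x * h x ∂μ = 0) (θ : ℝ) :
    MgfLe μ (fun x => ρ x * h x) θ (4 * τ ^ 2 * s) := by
  have hs := H.pos
  have hm := H.measurable
  have hEi := H.integrable
  have hE := H.integral_le
  set E : α → ℝ := fun x => Real.exp (h x ^ 2 / (4 * s)) with hEdef
  have hτ0 : ∀ x : α, ρ x ^ 2 ≤ τ ^ 2 := fun x => sq_le_sq' (abs_le.1 (hτ x)).1 (abs_le.1 (hτ x)).2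
  set q := 4 * s * θ ^ 2 * τ ^ 2 with hq
  have hq0 : 0 ≤ q := by positivity
  have hqV : θ ^ 2 * (4 * τ ^ 2 * s) = q := by rw [hq]; ring
  -- a crude bound giving integrability for every `θ`
  have hb : ∀ x, Real.exp (θ * (ρ x * h x)) ≤ Real.exp (q / 4) * E x := by
    intro x
    rw [hEdef, ← Real.exp_add]
    refine Real.exp_le_exp.2 ?_
    have h1 : 0 ≤ (2 * s * (θ * ρ x) - h x) ^ 2 / (4 * s) := by positivity
    have h2 : (2 * s * (θ * ρ x) - h x) ^ 2 / (4 * s) =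
        s * θ ^ 2 * ρ x ^ 2 - θ * (ρ x * h x) + h x ^ 2 / (4 * s) := by field_simp; ring
    have h3 : s * θ ^ 2 * ρ x ^ 2 ≤ q / 4 := by
      rw [hq]
      have := mul_le_mul_of_nonneg_left (hτ0 x) (show 0 ≤ s * θ ^ 2 by positivity)
      linarith
    linarith
  have hint : Integrable (fun x => Real.exp (θ * (ρ x * h x))) μ := by
    refine (hEi.const_mul (Real.exp (q / 4))).mono' (by fun_prop)
      (Filter.Eventually.of_forall fun x => ?_)
    rw [Real.norm_eq_abs, Real.abs_exp]
    exact hb x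
  refine ⟨hint, ?_⟩
  rw [hqV]
  rcases le_or_gt q 1 with hq1 | hq1
  · have hprod : Integrable (fun x => ρ x * h x) μ := by
      refine ((integrable_const (1 : ℝ)).add (hEi.const_mul (τ ^ 2 * (4 * s)))).mono' (by fun_prop)
        (Filter.Eventually.of_forall fun x => ?_)
      simp only [Real.norm_eq_abs, Pi.add_apply]
      have h1 : h x ^ 2 ≤ 4 * s * E x := by
        have := Real.add_one_le_exp (h x ^ 2 / (4 * s))
        have h2 : h x ^ 2 = 4 * s * (h x ^ 2 / (4 * s)) := by field_simp
        rw [h2]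
        refine mul_le_mul_of_nonneg_left ?_ (by positivity)
        simp only [hEdef]
        linarith
      have h3 : |ρ x * h x| ≤ 1 + ρ x ^ 2 * h x ^ 2 := by
        rw [← mul_pow, ← sq_abs]
        nlinarith [sq_nonneg (|ρ x * h x| - 1), abs_nonneg (ρ x * h x)]
      have h4 : ρ x ^ 2 * h x ^ 2 ≤ τ ^ 2 * (4 * s * E x) :=
        mul_le_mul (hτ0 x) h1 (sq_nonneg _) (sq_nonneg _)
      linarith
    have hpt : ∀ x, Real.exp (θ * (ρ x * h x)) ≤ θ * (ρ x * h x) + ((1 - q) + q * E x) := by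
      intro x
      refine (exp_le_add_exp_sq _).trans ?_
      have h1 : (θ * (ρ x * h x)) ^ 2 ≤ q * (h x ^ 2 / (4 * s)) := by
        have e : q * (h x ^ 2 / (4 * s)) = θ ^ 2 * τ ^ 2 * h x ^ 2 := by rw [hq]; field_simp
        rw [e]
        have := mul_le_mul_of_nonneg_left (hτ0 x) (show 0 ≤ θ ^ 2 * h x ^ 2 by positivity)
        nlinarith
      have h2 := convexOn_exp.2 (Set.mem_univ (0 : ℝ)) (Set.mem_univ (h x ^ 2 / (4 * s)))
        (show 0 ≤ 1 - q by linarith) hq0 (by ring)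
      simp only [smul_eq_mul, mul_zero, zero_add, Real.exp_zero, mul_one] at h2
      have h3 := Real.exp_le_exp.2 h1
      simp only [hEdef]
      linarith
    have hi2 : Integrable (fun x => (1 - q) + q * E x) μ :=
      (integrable_const (1 - q)).add (hEi.const_mul q)
    calc _ ≤ ∫ x, (θ * (ρ x * h x) + ((1 - q) + q * E x)) ∂μ :=
          integral_mono hint ((hprod.const_mul θ).add hi2) hpt
      _ = (1 - q) + q * ∫ x, E x ∂μ := by
          rw [integral_add (hprod.const_mul θ) hi2,
            integral_add (integrable_const (1 - q)) (hEi.const_mul q), integral_const_mul,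
            integral_const_mul, h0]
          simp
      _ ≤ 1 + q := by nlinarith
      _ ≤ _ := by linarith [Real.add_one_le_exp q]
  · calc _ ≤ ∫ x, Real.exp (q / 4) * E x ∂μ := integral_mono hint (hEi.const_mul _) hb
      _ ≤ Real.exp (q / 4) * 2 := by rw [integral_const_mul]; gcongr
      _ ≤ Real.exp (q / 4) * Real.exp (3 * q / 4) := by
          gcongr
          have h1 := Real.quadratic_le_exp_of_nonneg (x := 3 * q / 4) (by linarith)
          nlinarith
      _ = _ := by rw [← Real.exp_add]; ring_nf

lemma SubGauss.sq_mul_pow_four_exp_le (H : SubGauss μ h s) (hm : 0 < m) (x : α)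
    (hθ : |θ| * τ * s ≤ 1 / 16) (hτ : |ρ x| ≤ τ) (hr : |ρ x| ≤ |r x|) :
    (ρ x * h x ^ 2) ^ 2 * Real.exp |θ * (ρ x * h x ^ 2)| ≤
      1 / 2 * (r x ^ 4 / m + m * (98304 * s ^ 4 * Real.exp (h x ^ 2 / (4 * s)))) := by
  have hs := H.pos
  have hrr : ρ x ^ 2 ≤ r x ^ 2 := sq_le_sq.2 hr
  have h1 : |θ * (ρ x * h x ^ 2)| ≤ h x ^ 2 / (16 * s) := by
    rw [abs_mul, abs_mul, abs_of_nonneg (sq_nonneg (h x)), le_div_iff₀ (by positivity)]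
    have : |θ| * |ρ x| ≤ |θ| * τ := by gcongr
    have h5 : |θ| * |ρ x| * s ≤ 1 / 16 := by nlinarith
    nlinarith [sq_nonneg (h x)]
  set X := h x ^ 4 * Real.exp (h x ^ 2 / (16 * s)) with hX
  have hX0 : 0 ≤ X := by positivity
  have hX2 : X ^ 2 = h x ^ 8 * Real.exp (h x ^ 2 / (8 * s)) := by
    rw [hX, mul_pow, ← Real.exp_nat_mul, ← pow_mul]
    congr 2
    push_cast; field_simp; ring
  have h2 : X ^ 2 ≤ 98304 * s ^ 4 * Real.exp (h x ^ 2 / (4 * s)) := by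
    rw [hX2]; exact pow_eight_mul_exp_le hs _
  have h3 : (ρ x * h x ^ 2) ^ 2 * Real.exp |θ * (ρ x * h x ^ 2)| ≤ r x ^ 2 * X := by
    calc _ = ρ x ^ 2 * (h x ^ 4 * Real.exp |θ * (ρ x * h x ^ 2)|) := by ring
      _ ≤ r x ^ 2 * X := by
        rw [hX]; gcongr
  have h4 : r x ^ 2 * X ≤ 1 / 2 * (r x ^ 4 / m + m * X ^ 2) := by
    have : 0 ≤ (r x ^ 2 - m * X) ^ 2 / (2 * m) := by positivity
    have e : (r x ^ 2 - m * X) ^ 2 / (2 * m) =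
      1 / 2 * (r x ^ 4 / m + m * X ^ 2) - r x ^ 2 * X := by field_simp; ring
    linarith
  have h5 : m * X ^ 2 ≤ m * (98304 * s ^ 4 * Real.exp (h x ^ 2 / (4 * s))) := by gcongr
  linarith

lemma SubGauss.integral_bound_le (H : SubGauss μ h s) (hm : 0 < m)
    (hr4 : Integrable (fun x => r x ^ 4) μ) (hr4le : ∫ x, r x ^ 4 ∂μ ≤ 2 ^ 24 * m ^ 2 * s ^ 4) :
    Integrable (fun x => 1 / 2 * (r x ^ 4 / m +
        m * (98304 * s ^ 4 * Real.exp (h x ^ 2 / (4 * s))))) μ ∧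
      ∫ x, 1 / 2 * (r x ^ 4 / m + m * (98304 * s ^ 4 * Real.exp (h x ^ 2 / (4 * s)))) ∂μ ≤
        2 ^ 24 * m * s ^ 4 := by
  have hs := H.pos
  have i2 : Integrable (fun x => m * (98304 * s ^ 4 * Real.exp (h x ^ 2 / (4 * s)))) μ :=
    (H.integrable.const_mul _).const_mul _
  refine ⟨((hr4.div_const m).add i2).const_mul _, ?_⟩
  rw [integral_const_mul, integral_add (hr4.div_const m) i2, integral_div, integral_const_mul,
    integral_const_mul]
  have h1 : (∫ x, r x ^ 4 ∂μ) / m ≤ 2 ^ 24 * m * s ^ 4 := by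
    rw [div_le_iff₀ hm]; linarith
  have h2 : m * (98304 * s ^ 4 * ∫ x, Real.exp (h x ^ 2 / (4 * s)) ∂μ) ≤
      m * (98304 * s ^ 4 * 2) := by
    gcongr; exact H.integral_le
  nlinarith [show 0 < m * s ^ 4 by positivity]

lemma SubGauss.mgfLe_mul_sq_sub (H : SubGauss μ h s) (hm : 0 < m) (hρ : Measurable ρ)
    (hτ : ∀ x, |ρ x| ≤ τ) (hr : ∀ x, |ρ x| ≤ |r x|) (hr4 : Integrable (fun x => r x ^ 4) μ)
    (hr4le : ∫ x, r x ^ 4 ∂μ ≤ 2 ^ 24 * m ^ 2 * s ^ 4) (hθ : |θ| * τ * s ≤ 1 / 16) :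
    MgfLe μ (fun x => ρ x * h x ^ 2 - ∫ y, ρ y * h y ^ 2 ∂μ) θ (2 ^ 24 * m * s ^ 4) := by
  have hmeas := H.measurable
  obtain ⟨h1, h2⟩ := H.integral_bound_le hm hr4 hr4le
  exact mgfLe_sub_integral (by fun_prop) h1
    (fun x => H.sq_mul_pow_four_exp_le hm x hθ (hτ x) (hr x)) h2

lemma SubGauss.mgfLe_mul_of_small (H : SubGauss μ h s) (hm : 0 < m) (hρ : Measurable ρ)
    (hτ : ∀ x, |ρ x| ≤ τ) (hr : ∀ x, |ρ x| ≤ |r x|) (hr4 : Integrable (fun x => r x ^ 4) μ)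
    (hr4le : ∫ x, r x ^ 4 ∂μ ≤ 2 ^ 24 * m ^ 2 * s ^ 4) (h0 : ∫ x, ρ x * h x ∂μ = 0)
    (hθ : |θ| * τ * √s ≤ 1 / 8) :
    MgfLe μ (fun x => ρ x * h x) θ (2 ^ 24 * m * s ^ 3) := by
  have hs := H.pos
  have hmeas := H.measurable
  have hsq := Real.sq_sqrt hs.le
  have hsp := Real.sqrt_pos.2 hs
  have i2 : Integrable (fun x => m * s * (256 * s ^ 2 * Real.exp (h x ^ 2 / (4 * s)))) μ :=
    (H.integrable.const_mul _).const_mul _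
  have i1 : Integrable (fun x => 1 / 2 * (r x ^ 4 / (m * s) +
      m * s * (256 * s ^ 2 * Real.exp (h x ^ 2 / (4 * s))))) μ :=
    ((hr4.div_const (m * s)).add i2).const_mul _
  have := mgfLe_sub_integral (Z := fun x => ρ x * h x) (θ := θ) (V := 2 ^ 24 * m * s ^ 3)
    (by fun_prop) i1 (fun x => ?_) ?_
  · simpa only [h0, sub_zero] using this
  · have hrr : ρ x ^ 2 ≤ r x ^ 2 := sq_le_sq.2 (hr x)
    have h1 : |θ * (ρ x * h x)| ≤ h x ^ 2 / (16 * s) + 1 / 16 := by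
      have e1 : |θ * (ρ x * h x)| ≤ |h x| / (8 * √s) := by
        rw [abs_mul, abs_mul, le_div_iff₀ (by positivity)]
        have a1 : |θ| * |ρ x| ≤ |θ| * τ := by gcongr; exact hτ x
        have a2 : |θ| * |ρ x| * √s ≤ 1 / 8 := by nlinarith
        nlinarith [abs_nonneg (h x)]
      have e2 : h x ^ 2 / (16 * s) + 1 / 16 - |h x| / (8 * √s) = (|h x| / √s - 1) ^ 2 / 16 := by
        rw [sub_sq, div_pow, sq_abs, hsq]; field_simp; ring
      have e3 : 0 ≤ (|h x| / √s - 1) ^ 2 / 16 := by positivity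
      linarith
    set X := h x ^ 2 * Real.exp (h x ^ 2 / (16 * s) + 1 / 16) with hX
    have hX2 : X ^ 2 = Real.exp (1 / 8) * (h x ^ 4 * Real.exp (h x ^ 2 / (8 * s))) := by
      have : Real.exp (1 / 8) * (h x ^ 4 * Real.exp (h x ^ 2 / (8 * s))) =
        h x ^ 4 * Real.exp (1 / 8 + h x ^ 2 / (8 * s)) := by rw [Real.exp_add]; ring
      rw [this, hX, mul_pow, ← Real.exp_nat_mul, ← pow_mul]
      congr 2
      push_cast; field_simp; ring
    have he : Real.exp (1 / 8) ≤ 2 := by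
      have := Real.exp_one_lt_d9
      have h8 : Real.exp (1 / 8) ^ 8 = Real.exp 1 := by
        rw [← Real.exp_nat_mul]; norm_num
      by_contra hc
      push Not at hc
      have : (2 : ℝ) ^ 8 < Real.exp (1 / 8) ^ 8 := by gcongr
      linarith
    have h2 : X ^ 2 ≤ 256 * s ^ 2 * Real.exp (h x ^ 2 / (4 * s)) := by
      rw [hX2]
      calc _ ≤ 2 * (128 * s ^ 2 * Real.exp (h x ^ 2 / (4 * s))) :=
            mul_le_mul he (pow_four_mul_exp_le hs _) (by positivity) (by norm_num)
        _ = _ := by ring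
    have h3 : (ρ x * h x) ^ 2 * Real.exp |θ * (ρ x * h x)| ≤ r x ^ 2 * X := by
      calc _ = ρ x ^ 2 * (h x ^ 2 * Real.exp |θ * (ρ x * h x)|) := by ring
        _ ≤ r x ^ 2 * X := by rw [hX]; gcongr
    have h4 : r x ^ 2 * X ≤ 1 / 2 * (r x ^ 4 / (m * s) + m * s * X ^ 2) := by
      have : 0 ≤ (r x ^ 2 - m * s * X) ^ 2 / (2 * (m * s)) := by positivity
      have e : (r x ^ 2 - m * s * X) ^ 2 / (2 * (m * s)) =
        1 / 2 * (r x ^ 4 / (m * s) + m * s * X ^ 2) - r x ^ 2 * X := by field_simp; ring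
      linarith
    have h5 : m * s * X ^ 2 ≤ m * s * (256 * s ^ 2 * Real.exp (h x ^ 2 / (4 * s))) := by gcongr
    linarith
  · rw [integral_const_mul, integral_add (hr4.div_const (m * s)) i2, integral_div,
      integral_const_mul, integral_const_mul]
    have h1 : (∫ x, r x ^ 4 ∂μ) / (m * s) ≤ 2 ^ 24 * m * s ^ 3 := by
      rw [div_le_iff₀ (by positivity)]; nlinarith
    have h2 : m * s * (256 * s ^ 2 * ∫ x, Real.exp (h x ^ 2 / (4 * s)) ∂μ) ≤
        m * s * (256 * s ^ 2 * 2) := by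
      gcongr; exact H.integral_le
    nlinarith [show 0 < m * s ^ 3 by positivity]

/-- Fourth moments from exponential moments. -/
lemma integral_pow_four_le {V : ℝ} (hr : Measurable r) (hθ : 0 < θ) (h1 : MgfLe μ r θ V)
    (h2 : MgfLe μ r (-θ) V) :
    Integrable (fun x => r x ^ 4) μ ∧
      ∫ x, r x ^ 4 ∂μ ≤ 48 / θ ^ 4 * Real.exp (θ ^ 2 * V) := by
  have hle : ∀ x, r x ^ 4 ≤ 24 / θ ^ 4 * (Real.exp (θ * r x) + Real.exp (-θ * r x)) := by
    intro x
    have h3 := pow_four_le_mul_exp (y := |θ * r x|) (abs_nonneg _)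
    have h4 : Real.exp |θ * r x| ≤ Real.exp (θ * r x) + Real.exp (-θ * r x) := by
      rcases abs_choice (θ * r x) with h | h <;> rw [h]
      · linarith [Real.exp_pos (-θ * r x)]
      · rw [neg_mul]; linarith [Real.exp_pos (θ * r x)]
    have h5 : |θ * r x| ^ 4 = θ ^ 4 * r x ^ 4 := by
      rw [show (4 : ℕ) = 2 * 2 from rfl, pow_mul, sq_abs]; ring
    rw [div_mul_eq_mul_div, le_div_iff₀ (by positivity)]
    nlinarith
  have hi : Integrable (fun x => 24 / θ ^ 4 * (Real.exp (θ * r x) + Real.exp (-θ * r x))) μ :=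
    (h1.1.add h2.1).const_mul _
  have hi4 : Integrable (fun x => r x ^ 4) μ := by
    refine hi.mono' (by fun_prop) (Filter.Eventually.of_forall fun x => ?_)
    rw [Real.norm_eq_abs, abs_of_nonneg (by positivity)]
    exact hle x
  refine ⟨hi4, (integral_mono hi4 hi hle).trans ?_⟩
  rw [integral_const_mul, integral_add h1.1 h2.1]
  have h3 := h1.2
  have h4 := h2.2
  rw [neg_sq] at h4
  calc _ ≤ 24 / θ ^ 4 * (Real.exp (θ ^ 2 * V) + Real.exp (θ ^ 2 * V)) := by gcongr
    _ = _ := by ring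

end

/-! ### The squared length of a Gaussian row -/

lemma hasDerivAt_mul_exp_sq {f f' : ℝ → ℝ} {v t : ℝ} (h : HasDerivAt f (f' t) t) :
    HasDerivAt (fun x => f x * Real.exp (v * x ^ 2 / 2))
      ((f' t + v * t * f t) * Real.exp (v * t ^ 2 / 2)) t := by
  have h1 : HasDerivAt (fun x : ℝ => v * x ^ 2 / 2) (v * t) t := by
    refine (((hasDerivAt_pow 2 t).const_mul v).div_const 2).congr_deriv ?_
    push_cast
    ring
  exact (h.mul h1.exp).congr_deriv (by ring)

lemma integral_pow_four_gaussianReal (v : NNReal) :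
    ∫ x, x ^ 4 ∂(gaussianReal 0 v) = 3 * (v : ℝ) ^ 2 := by
  have h0 : mgf id (gaussianReal 0 v) = fun t => 1 * Real.exp (v * t ^ 2 / 2) := by
    rw [mgf_id_gaussianReal]; ext t; simp
  have h := iteratedDeriv_mgf_zero (X := id) (μ := gaussianReal 0 v)
    (by rw [integrableExpSet_id_gaussianReal]; simp) 4
  have d1 : deriv (fun t : ℝ => 1 * Real.exp (v * t ^ 2 / 2)) =
      fun t => (v * t) * Real.exp (v * t ^ 2 / 2) := by
    ext t
    rw [(hasDerivAt_mul_exp_sq (f' := fun _ => 0) (hasDerivAt_const t (1 : ℝ))).deriv]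
    simp
  have d2 : deriv (fun t : ℝ => (v * t) * Real.exp (v * t ^ 2 / 2)) =
      fun t => (v + v ^ 2 * t ^ 2) * Real.exp (v * t ^ 2 / 2) := by
    ext t
    rw [(hasDerivAt_mul_exp_sq (f' := fun _ => (v : ℝ) * 1)
      ((hasDerivAt_id' t).const_mul (v : ℝ))).deriv]
    ring
  have d3 : deriv (fun t : ℝ => (v + v ^ 2 * t ^ 2) * Real.exp (v * t ^ 2 / 2)) =
      fun t => (3 * v ^ 2 * t + v ^ 3 * t ^ 3) * Real.exp (v * t ^ 2 / 2) := by
    ext t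
    rw [(hasDerivAt_mul_exp_sq (f' := fun t => (v : ℝ) ^ 2 * ((2 : ℕ) * t ^ (2 - 1)))
      (((hasDerivAt_pow 2 t).const_mul ((v : ℝ) ^ 2)).const_add (v : ℝ))).deriv]
    push_cast; ring
  have d4 : deriv (fun t : ℝ => (3 * v ^ 2 * t + v ^ 3 * t ^ 3) * Real.exp (v * t ^ 2 / 2)) 0 =
      3 * (v : ℝ) ^ 2 := by
    rw [(hasDerivAt_mul_exp_sq (f := fun t => 3 * (v : ℝ) ^ 2 * t + (v : ℝ) ^ 3 * t ^ 3)
      (f' := fun t => 3 * (v : ℝ) ^ 2 * 1 + (v : ℝ) ^ 3 * ((3 : ℕ) * t ^ (3 - 1)))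
      (((hasDerivAt_id' 0).const_mul (3 * (v : ℝ) ^ 2)).add
        ((hasDerivAt_pow 3 0).const_mul ((v : ℝ) ^ 3)))).deriv]
    simp
  simp only [h0, iteratedDeriv_succ, iteratedDeriv_zero, d1, d2, d3, d4] at h
  rw [h]
  simp

lemma subGauss_gaussianReal {s : NNReal} (hs : 0 < s) :
    SubGauss (gaussianReal 0 s) (fun x => x) s :=
  ⟨by exact_mod_cast hs, measurable_id, (integral_exp_sq_gaussianReal_le hs le_rfl).1,
    (integral_exp_sq_gaussianReal_le hs le_rfl).2⟩

/-- The deviation of the squared length of a row from its mean. -/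
noncomputable def dev (d : ℕ) (s : ℝ) (g : Fin d → ℝ) : ℝ := ∑ k, g k ^ 2 - d * s

/-- The deviation, set to zero where it exceeds `τ`. -/
noncomputable def truncDev (d : ℕ) (s τ : ℝ) (g : Fin d → ℝ) : ℝ :=
  if |dev d s g| ≤ τ then dev d s g else 0

section
variable {d n : ℕ} {s : NNReal} {θ τ p : ℝ} {x : Fin d → ℝ}

@[fun_prop]
lemma measurable_dev {s : ℝ} : Measurable (dev d s) := by unfold dev; fun_prop

@[fun_prop]
lemma measurable_truncDev {s : ℝ} : Measurable (truncDev d s τ) :=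
  Measurable.ite (measurableSet_le (by fun_prop) measurable_const) measurable_dev measurable_const

lemma abs_truncDev_le {s : ℝ} (hτ : 0 ≤ τ) (g : Fin d → ℝ) : |truncDev d s τ g| ≤ τ := by
  unfold truncDev; split_ifs with h
  · exact h
  · simpa using hτ

lemma abs_truncDev_le_abs_dev {s : ℝ} (g : Fin d → ℝ) : |truncDev d s τ g| ≤ |dev d s g| := by
  unfold truncDev; split_ifs with h
  · exact le_rfl
  · simp

lemma truncDev_neg {s : ℝ} (g : Fin d → ℝ) : truncDev d s τ (-g) = truncDev d s τ g := by
  have : dev d s (-g) = dev d s g := by simp [dev]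
  simp only [truncDev, this]

lemma subGauss_dotProduct (hs : 0 < s) (hx : ∑ k, x k ^ 2 ≤ 1) :
    SubGauss (gaussVec d s) (fun g => g ⬝ᵥ x) s :=
  ⟨by exact_mod_cast hs, measurable_dotProduct_right x, (integral_exp_sq_dotProduct_le hs hx).1,
    (integral_exp_sq_dotProduct_le hs hx).2⟩

lemma mgfLe_dev (hs : 0 < s) (hd : d ≤ n) (hθ : |θ| * s ≤ 1 / 8) :
    MgfLe (gaussVec d s) (dev d s) θ (256 * n * (s : ℝ) ^ 2) := by
  have h := mgfLe_sum (ι := Fin d) (fun _ => (subGauss_gaussianReal hs).mgfLe_sq_sub hθ)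
  have hv : ∫ y, y ^ 2 ∂(gaussianReal 0 s) = s := by
    have := variance_fun_id_gaussianReal (μ := 0) (v := s)
    rw [variance_eq_integral (by fun_prop), integral_id_gaussianReal] at this
    simpa using this
  simp only [hv, Finset.sum_sub_distrib, Finset.sum_const, Finset.card_univ, Fintype.card_fin,
    nsmul_eq_mul] at h
  refine MgfLe.mono h ?_
  have : (d : ℝ) ≤ n := by exact_mod_cast hd
  nlinarith [sq_nonneg (s : ℝ)]

lemma integral_dev_pow_four (hs : 0 < s) (hd : d ≤ n) (hn : 1 ≤ n) :
    Integrable (fun g => dev d s g ^ 4) (gaussVec d s) ∧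
      ∫ g, dev d s g ^ 4 ∂(gaussVec d s) ≤ 2 ^ 24 * (n : ℝ) ^ 2 * (s : ℝ) ^ 4 := by
  have hs' : (0 : ℝ) < s := by exact_mod_cast hs
  have hn' : (1 : ℝ) ≤ n := by exact_mod_cast hn
  have hsn : 1 ≤ √(n : ℝ) := Real.one_le_sqrt.2 hn'
  have hsq : √(n : ℝ) ^ 2 = n := Real.sq_sqrt (by linarith)
  set θ : ℝ := 1 / (16 * √(n : ℝ) * s) with hθ
  have hθ0 : 0 < θ := by positivity
  have hθs : θ * s ≤ 1 / 8 := by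
    have : θ * s = 1 / (16 * √(n : ℝ)) := by rw [hθ]; field_simp
    rw [this]
    exact one_div_le_one_div_of_le (by norm_num) (by linarith)
  obtain ⟨h1, h2⟩ := integral_pow_four_le (measurable_dev (d := d) (s := s)) hθ0
    (mgfLe_dev hs hd (by rwa [abs_of_pos hθ0]))
    (mgfLe_dev hs hd (by rwa [abs_neg, abs_of_pos hθ0]))
  refine ⟨h1, h2.trans ?_⟩
  have e1 : θ ^ 2 * (256 * n * (s : ℝ) ^ 2) = 1 := by
    rw [hθ, div_pow, mul_pow, mul_pow, hsq]; field_simp; ring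
  have hsq4 : √(n : ℝ) ^ 4 = n ^ 2 := by rw [show 4 = 2 * 2 from rfl, pow_mul, hsq]
  have e2 : 48 / θ ^ 4 = 48 * 65536 * (n : ℝ) ^ 2 * (s : ℝ) ^ 4 := by
    rw [hθ, div_pow, mul_pow, mul_pow, hsq4]; field_simp; ring
  rw [e1, e2]
  have := Real.exp_one_lt_d9
  have h0 : 0 < (n : ℝ) ^ 2 * (s : ℝ) ^ 4 := by positivity
  nlinarith

lemma measure_dev_ge_le (hs : 0 < s) (hd : d ≤ n) (hτ : 0 < τ) (hp : 0 < p)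
    (h1 : 1024 * p * n * (s : ℝ) ^ 2 ≤ τ ^ 2) (h2 : 16 * p * s ≤ τ) :
    gaussVec d s {g | τ ≤ |dev d s g|} ≤ ENNReal.ofReal (2 * Real.exp (-p)) := by
  have h0 : 0 < 2 * p / τ := by positivity
  have h3 : 2 * p / τ * s ≤ 1 / 8 := by
    rw [div_mul_eq_mul_div, div_le_iff₀ hτ]; linarith
  exact measure_abs_ge_le hτ hp (by linarith) (mgfLe_dev hs hd (by rwa [abs_of_pos h0]))
    (mgfLe_dev hs hd (by rwa [abs_neg, abs_of_pos h0]))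

lemma measurePreserving_neg_gaussVec :
    MeasurePreserving (fun g : Fin d → ℝ => -g) (gaussVec d s) (gaussVec d s) := by
  refine measurePreserving_pi _ _ (f := fun _ (y : ℝ) => -y) fun _ => ⟨measurable_neg, ?_⟩
  rw [gaussianReal_map_neg, neg_zero]

lemma integral_truncDev_mul_dotProduct (x : Fin d → ℝ) :
    ∫ g, truncDev d s τ g * (g ⬝ᵥ x) ∂(gaussVec d s) = 0 := by
  have h := (measurePreserving_neg_gaussVec (d := d) (s := s)).integral_comp
    (MeasurableEquiv.neg (Fin d → ℝ)).measurableEmbedding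
    (fun g => truncDev d s τ g * (g ⬝ᵥ x))
  simp only [truncDev_neg, neg_dotProduct, mul_neg, integral_neg] at h
  linarith

lemma memLp_dotProduct (x : Fin d → ℝ) (q : ENNReal) (hq : q ≠ ⊤) :
    MemLp (fun g => g ⬝ᵥ x) q (gaussVec d s) := by
  have h := memLp_id_gaussianReal' (μ := 0) (v := s * ∑ k, Real.toNNReal (x k ^ 2)) q hq
  rw [← gaussVec_map_dotProduct] at h
  exact h.comp_of_map (measurable_dotProduct_right x).aemeasurable

lemma integrable_dotProduct_pow_four (x : Fin d → ℝ) :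
    Integrable (fun g => (g ⬝ᵥ x) ^ 4) (gaussVec d s) := by
  have := (memLp_dotProduct (s := s) x 4 (by norm_num)).integrable_norm_pow (by norm_num)
  refine this.congr (Filter.Eventually.of_forall fun g => ?_)
  simp only [Real.norm_eq_abs]
  exact (show Even 4 by decide).pow_abs _

lemma integral_dotProduct_pow_four (x : Fin d → ℝ) :
    ∫ g, (g ⬝ᵥ x) ^ 4 ∂(gaussVec d s) = 3 * (s : ℝ) ^ 2 * (∑ k, x k ^ 2) ^ 2 := by
  have hm := (measurable_dotProduct_right x).aemeasurable (μ := gaussVec d s)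
  have h := integral_pow_four_gaussianReal (s * ∑ k, Real.toNNReal (x k ^ 2))
  rw [← gaussVec_map_dotProduct, coe_variance, integral_map hm (by fun_prop)] at h
  rw [h]; ring

lemma integrable_dotProduct_sq (x : Fin d → ℝ) :
    Integrable (fun g => (g ⬝ᵥ x) ^ 2) (gaussVec d s) :=
  (memLp_dotProduct (s := s) x 2 (by norm_num)).integrable_sq

lemma integral_sq_mul_dotProduct_sq (x y : Fin d → ℝ) :
    Integrable (fun g => (g ⬝ᵥ x) ^ 2 * (g ⬝ᵥ y) ^ 2) (gaussVec d s) ∧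
    ∫ g, (g ⬝ᵥ x) ^ 2 * (g ⬝ᵥ y) ^ 2 ∂(gaussVec d s) =
      (s : ℝ) ^ 2 * ((∑ k, x k ^ 2) * (∑ k, y k ^ 2) + 2 * (x ⬝ᵥ y) ^ 2) := by
  have e : ∀ g : Fin d → ℝ, (g ⬝ᵥ x) ^ 2 * (g ⬝ᵥ y) ^ 2 =
      ((g ⬝ᵥ (x + y)) ^ 4 + (g ⬝ᵥ (x - y)) ^ 4 - 2 * (g ⬝ᵥ x) ^ 4 - 2 * (g ⬝ᵥ y) ^ 4) / 12 := by
    intro g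
    rw [dotProduct_add, dotProduct_sub]; ring
  simp only [e]
  have i1 := integrable_dotProduct_pow_four (s := s) x
  have i2 := integrable_dotProduct_pow_four (s := s) y
  have i3 := integrable_dotProduct_pow_four (s := s) (x + y)
  have i4 := integrable_dotProduct_pow_four (s := s) (x - y)
  have i5 : Integrable (fun g => (g ⬝ᵥ (x + y)) ^ 4 + (g ⬝ᵥ (x - y)) ^ 4) (gaussVec d s) := i3.add i4
  have i6 : Integrable (fun g => (g ⬝ᵥ (x + y)) ^ 4 + (g ⬝ᵥ (x - y)) ^ 4 - 2 * (g ⬝ᵥ x) ^ 4)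
      (gaussVec d s) := i5.sub (i1.const_mul 2)
  refine ⟨(i6.sub (i2.const_mul 2)).div_const 12, ?_⟩
  rw [integral_div, integral_sub i6 (i2.const_mul 2), integral_sub i5 (i1.const_mul 2),
    integral_add i3 i4, integral_const_mul, integral_const_mul]
  simp only [integral_dotProduct_pow_four]
  have e1 : ∑ k, (x + y) k ^ 2 = ∑ k, x k ^ 2 + ∑ k, y k ^ 2 + 2 * (x ⬝ᵥ y) := by
    rw [dotProduct, Finset.mul_sum, ← Finset.sum_add_distrib, ← Finset.sum_add_distrib]
    exact Finset.sum_congr rfl fun k _ => by simp only [Pi.add_apply]; ring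
  have e2 : ∑ k, (x - y) k ^ 2 = ∑ k, x k ^ 2 + ∑ k, y k ^ 2 - 2 * (x ⬝ᵥ y) := by
    rw [dotProduct, Finset.mul_sum, ← Finset.sum_add_distrib, ← Finset.sum_sub_distrib]
    exact Finset.sum_congr rfl fun k _ => by simp only [Pi.sub_apply]; ring
  rw [e1, e2]
  ring

lemma integral_dev_mul_dotProduct_sq (x : Fin d → ℝ) :
    Integrable (fun g => dev d s g * (g ⬝ᵥ x) ^ 2) (gaussVec d s) ∧
    ∫ g, dev d s g * (g ⬝ᵥ x) ^ 2 ∂(gaussVec d s) = 2 * (s : ℝ) ^ 2 * ∑ k, x k ^ 2 := by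
  have e : ∀ g : Fin d → ℝ, dev d s g * (g ⬝ᵥ x) ^ 2 =
      ∑ k, (g ⬝ᵥ x) ^ 2 * (g ⬝ᵥ Pi.single k 1) ^ 2 - d * s * (g ⬝ᵥ x) ^ 2 := by
    intro g
    simp only [dotProduct_single, mul_one, dev, ← Finset.mul_sum]
    ring
  simp only [e]
  have i1 : Integrable (fun g => ∑ k, (g ⬝ᵥ x) ^ 2 * (g ⬝ᵥ Pi.single k 1) ^ 2) (gaussVec d s) :=
    integrable_finsetSum _ fun k _ => (integral_sq_mul_dotProduct_sq x _).1
  have i2 := (integrable_dotProduct_sq (s := s) x).const_mul ((d : ℝ) * s)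
  refine ⟨i1.sub i2, ?_⟩
  rw [integral_sub i1 i2, integral_finsetSum _ fun k _ => (integral_sq_mul_dotProduct_sq x _).1,
    integral_const_mul, integral_dotProduct_sq]
  have hk : ∀ k : Fin d, ∫ g, (g ⬝ᵥ x) ^ 2 * (g ⬝ᵥ Pi.single k 1) ^ 2 ∂(gaussVec d s) = _ :=
    fun k => (integral_sq_mul_dotProduct_sq x (Pi.single k 1)).2
  simp only [hk]
  simp only [dotProduct_single, mul_one]
  have : ∀ k : Fin d, ∑ j, (Pi.single k (1 : ℝ) : Fin d → ℝ) j ^ 2 = 1 := by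
    intro k
    rw [Finset.sum_eq_single k] <;> simp +contextual
  simp only [this, ← Finset.mul_sum, Finset.sum_add_distrib, Finset.sum_const, Finset.card_univ,
    Fintype.card_fin, nsmul_eq_mul]
  ring

/-- The truncation changes `E (dev · h²) = 2 s² ‖x‖²` only by little. -/
lemma abs_integral_truncDev_mul_sub_le (hs : 0 < s) (hd : d ≤ n) (hn : 1 ≤ n)
    (hx : ∑ k, x k ^ 2 ≤ 1) (hτ : gaussVec d s {g | τ < |dev d s g|} ≤ s) :
    |∫ g, truncDev d s τ g * (g ⬝ᵥ x) ^ 2 ∂(gaussVec d s) - 2 * (s : ℝ) ^ 2 * ∑ k, x k ^ 2| ≤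
      2 ^ 24 * (√(n : ℝ) * (s : ℝ) ^ 2 * √(s : ℝ)) := by
  have hs' : (0 : ℝ) < s := by exact_mod_cast hs
  have hn' : (1 : ℝ) ≤ n := by exact_mod_cast hn
  have hsn : 1 ≤ √(n : ℝ) := Real.one_le_sqrt.2 hn'
  have hss : 0 < √(s : ℝ) := Real.sqrt_pos.2 hs'
  have hsq : √(n : ℝ) ^ 2 = n := Real.sq_sqrt (by linarith)
  have hsq' : √(s : ℝ) ^ 2 = s := Real.sq_sqrt hs'.le
  have H := subGauss_dotProduct hs hx
  obtain ⟨h4, h4'⟩ := integral_dev_pow_four hs hd hn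
  obtain ⟨hi, hle⟩ := H.integral_bound_le (by linarith) h4 h4'
  obtain ⟨hj, hje⟩ := integral_dev_mul_dotProduct_sq (s := s) x
  rw [← hje]
  set S : Set (Fin d → ℝ) := {g | τ < |dev d s g|} with hS
  have hSm : MeasurableSet S := measurableSet_lt measurable_const (by fun_prop)
  have hmeas := H.measurable
  have ht : Integrable (fun g => truncDev d s τ g * (g ⬝ᵥ x) ^ 2) (gaussVec d s) := by
    refine hj.mono (by fun_prop) (Filter.Eventually.of_forall fun g => ?_)
    simp only [norm_mul, Real.norm_eq_abs]
    exact mul_le_mul_of_nonneg_right (abs_truncDev_le_abs_dev g) (abs_nonneg _)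
  rw [← integral_sub ht hj]
  set κ : ℝ := 1 / (√(n : ℝ) * s * √(s : ℝ)) with hκ
  have hκ0 : 0 < κ := by positivity
  set G : (Fin d → ℝ) → ℝ := fun g => 1 / 2 * (dev d s g ^ 4 / n +
        n * (98304 * (s : ℝ) ^ 4 * Real.exp ((g ⬝ᵥ x) ^ 2 / (4 * s)))) with hG
  have hSi : Integrable (fun g => κ⁻¹ * S.indicator 1 g) (gaussVec d s) :=
    ((integrable_const (1 : ℝ)).indicator hSm).const_mul _
  have hb : Integrable (fun g => 1 / 2 * (κ * G g + κ⁻¹ * S.indicator 1 g)) (gaussVec d s) :=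
    ((hi.const_mul κ).add hSi).const_mul _
  have hpt : ∀ g, |truncDev d s τ g * (g ⬝ᵥ x) ^ 2 - dev d s g * (g ⬝ᵥ x) ^ 2| ≤
      1 / 2 * (κ * G g + κ⁻¹ * S.indicator 1 g) := by
    intro g
    have h1 := H.sq_mul_pow_four_exp_le (m := n) (θ := 0) (τ := |dev d s g|) (ρ := dev d s)
      (r := dev d s) (by linarith) g (by simp) le_rfl le_rfl
    simp only [zero_mul, abs_zero, Real.exp_zero, mul_one] at h1
    have hG0 : 0 ≤ G g := (sq_nonneg _).trans h1
    by_cases hg : g ∈ S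
    · have hg' : ¬ |dev d s g| ≤ τ := not_le.2 hg
      rw [Set.indicator_of_mem hg, truncDev, if_neg hg', zero_mul, zero_sub, abs_neg]
      simp only [Pi.one_apply, mul_one]
      set z := |dev d s g * (g ⬝ᵥ x) ^ 2| with hz
      have hz2 : z ^ 2 ≤ G g := by rw [hz, sq_abs]; exact h1
      have h2 : 0 ≤ (κ * z - 1) ^ 2 / κ := by positivity
      have h3 : (κ * z - 1) ^ 2 / κ = κ * z ^ 2 - 2 * z + κ⁻¹ := by field_simp; ring
      nlinarith
    · have hg' : |dev d s g| ≤ τ := not_lt.1 hg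
      rw [Set.indicator_of_notMem hg, truncDev, if_pos hg', sub_self, abs_zero]
      positivity
  have hSr : (gaussVec d s).real S ≤ s := by
    rw [measureReal_def]
    have := ENNReal.toReal_mono (by simp) hτ
    simpa using this
  calc _ ≤ ∫ g, |truncDev d s τ g * (g ⬝ᵥ x) ^ 2 - dev d s g * (g ⬝ᵥ x) ^ 2| ∂(gaussVec d s) :=
        abs_integral_le_integral_abs
    _ ≤ ∫ g, 1 / 2 * (κ * G g + κ⁻¹ * S.indicator 1 g) ∂(gaussVec d s) :=
        integral_mono (ht.sub hj).abs hb hpt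
    _ = 1 / 2 * (κ * ∫ g, G g ∂(gaussVec d s) + κ⁻¹ * (gaussVec d s).real S) := by
        rw [integral_const_mul, integral_add (hi.const_mul κ) hSi, integral_const_mul κ G,
          integral_const_mul κ⁻¹ (S.indicator 1), integral_indicator_one hSm]
    _ ≤ 1 / 2 * (κ * (2 ^ 24 * n * (s : ℝ) ^ 4) + κ⁻¹ * s) := by gcongr
    _ = 1 / 2 * (2 ^ 24 + 1) * (√(n : ℝ) * (s : ℝ) ^ 2 * √(s : ℝ)) := by
        have e1 : κ * (2 ^ 24 * n * (s : ℝ) ^ 4) = 2 ^ 24 * (√(n : ℝ) * (s : ℝ) ^ 2 * √(s : ℝ)) := by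
          rw [hκ]
          field_simp
          rw [hsq, hsq', mul_comm]
        have e2 : κ⁻¹ * s = √(n : ℝ) * (s : ℝ) ^ 2 * √(s : ℝ) := by
          rw [hκ, one_div, inv_inv]; ring
        rw [e1, e2]; ring
    _ ≤ _ := by
        have : 0 < √(n : ℝ) * (s : ℝ) ^ 2 * √(s : ℝ) := by positivity
        nlinarith

end

/-! ### The Euclidean norm and nets of the unit ball -/

section
variable {d : ℕ}

lemma eucNorm_eq_norm (x : Fin d → ℝ) : eucNorm x = ‖(WithLp.toLp 2 x : EuclideanSpace ℝ (Fin d))‖ := by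
  rw [EuclideanSpace.norm_eq, eucNorm]
  simp [sq_abs]

lemma eucNorm_nonneg (x : Fin d → ℝ) : 0 ≤ eucNorm x := Real.sqrt_nonneg _

lemma eucNorm_sq (x : Fin d → ℝ) : eucNorm x ^ 2 = ∑ i, x i ^ 2 :=
  Real.sq_sqrt (Finset.sum_nonneg fun _ _ => sq_nonneg _)

lemma eucNorm_sq_eq_dotProduct (x : Fin d → ℝ) : eucNorm x ^ 2 = x ⬝ᵥ x := by
  rw [eucNorm_sq, dotProduct]; exact Finset.sum_congr rfl fun _ _ => by ring

lemma abs_dotProduct_le (x y : Fin d → ℝ) : |x ⬝ᵥ y| ≤ eucNorm x * eucNorm y := by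
  have := abs_real_inner_le_norm (WithLp.toLp 2 x : EuclideanSpace ℝ (Fin d)) (WithLp.toLp 2 y)
  rw [← eucNorm_eq_norm, ← eucNorm_eq_norm] at this
  convert this using 2
  simp [EuclideanSpace.inner_eq_star_dotProduct, dotProduct_comm]

lemma eucNorm_add_le (x y : Fin d → ℝ) : eucNorm (x + y) ≤ eucNorm x + eucNorm y := by
  simp only [eucNorm_eq_norm, WithLp.toLp_add]; exact norm_add_le _ _

lemma eucNorm_sub_le (x y : Fin d → ℝ) : eucNorm (x - y) ≤ eucNorm x + eucNorm y := by
  simp only [eucNorm_eq_norm, WithLp.toLp_sub]; exact norm_sub_le _ _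

lemma eucNorm_smul (c : ℝ) (x : Fin d → ℝ) : eucNorm (c • x) = |c| * eucNorm x := by
  simp only [eucNorm_eq_norm, WithLp.toLp_smul, norm_smul, Real.norm_eq_abs]

lemma eucNorm_eq_zero {x : Fin d → ℝ} : eucNorm x = 0 ↔ x = 0 := by
  rw [eucNorm_eq_norm, norm_eq_zero, WithLp.toLp_eq_zero]

lemma eucNorm_le_one_iff {x : Fin d → ℝ} : eucNorm x ≤ 1 ↔ ∑ i, x i ^ 2 ≤ 1 := by
  rw [eucNorm, Real.sqrt_le_left zero_le_one, one_pow]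

/-- A `1/2`-net of the unit ball of `ℝ^d` with at most `5^d` points. -/
lemma exists_net (d : ℕ) : ∃ S : Finset (Fin d → ℝ), S.card ≤ 5 ^ d ∧ (∀ x ∈ S, eucNorm x ≤ 1) ∧
    ∀ y, eucNorm y ≤ 1 → ∃ x ∈ S, eucNorm (y - x) ≤ 1 / 2 := by
  classical
  let P : ℕ → Prop := fun k => ∃ S : Finset (EuclideanSpace ℝ (Fin d)), S.card = k ∧
    (∀ c ∈ S, ‖c‖ ≤ 2) ∧ ∀ c ∈ S, ∀ c' ∈ S, c ≠ c' → 1 ≤ ‖c - c'‖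
  have hP : ∀ k, P k → k ≤ 5 ^ d := by
    rintro k ⟨S, rfl, h1, h2⟩
    simpa using Besicovitch.card_le_of_separated S h1 h2
  have hP0 : P 0 := ⟨∅, by simp⟩
  obtain ⟨S, hSc, h1, h2⟩ : P (Nat.findGreatest P (5 ^ d)) :=
    Nat.findGreatest_spec (m := 0) (by positivity) hP0
  refine ⟨S.image fun c : EuclideanSpace ℝ (Fin d) => ((1 / 2 : ℝ) • (c : Fin d → ℝ)), ?_, ?_, ?_⟩
  · exact Finset.card_image_le.trans (hP _ ⟨S, rfl, h1, h2⟩)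
  · intro x hx
    obtain ⟨c, hc, rfl⟩ := Finset.mem_image.1 hx
    rw [eucNorm_smul, eucNorm_eq_norm]
    have := h1 c hc
    norm_num
    linarith
  · intro y hy
    set z : EuclideanSpace ℝ (Fin d) := WithLp.toLp 2 ((2 : ℝ) • y) with hz
    have hzn : ‖z‖ ≤ 2 := by
      rw [hz, ← eucNorm_eq_norm, eucNorm_smul]; norm_num; linarith
    have hex : ∃ c ∈ S, ‖z - c‖ < 1 := by
      by_contra hcon
      push Not at hcon
      have hzS : z ∉ S := fun h => by have := hcon z h; norm_num at this
      have : P (S.card + 1) := by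
        refine ⟨insert z S, Finset.card_insert_of_notMem hzS, ?_, ?_⟩
        · intro c hc
          rcases Finset.mem_insert.1 hc with rfl | hc
          · exact hzn
          · exact h1 c hc
        · intro c hc c' hc' hne
          rcases Finset.mem_insert.1 hc with rfl | hc <;>
          rcases Finset.mem_insert.1 hc' with rfl | hc'
          · exact absurd rfl hne
          · exact hcon c' hc'
          · rw [norm_sub_rev]; exact hcon c hc
          · exact h2 c hc c' hc' hne
      have h3 := Nat.le_findGreatest (hP _ this) this
      omega
    obtain ⟨c, hc, hcz⟩ := hex
    refine ⟨(1 / 2 : ℝ) • (c : Fin d → ℝ), Finset.mem_image.2 ⟨c, hc, rfl⟩, ?_⟩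
    have e : y - (1 / 2 : ℝ) • (c : Fin d → ℝ) = (1 / 2 : ℝ) • ((2 : ℝ) • y - (c : Fin d → ℝ)) := by
      rw [smul_sub, smul_smul]; norm_num
    rw [e, eucNorm_smul, eucNorm_eq_norm]
    have e2 : (WithLp.toLp 2 ((2 : ℝ) • y - (c : Fin d → ℝ)) : EuclideanSpace ℝ (Fin d)) = z - c := rfl
    rw [e2]
    norm_num
    linarith

lemma eucNorm_le_of_net {S : Finset (Fin d → ℝ)}
    (hS : ∀ y, eucNorm y ≤ 1 → ∃ x ∈ S, eucNorm (y - x) ≤ 1 / 2) {b : Fin d → ℝ} {t : ℝ}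
    (h : ∀ x ∈ S, |b ⬝ᵥ x| ≤ t) : eucNorm b ≤ 2 * t := by
  rcases (eucNorm_nonneg b).eq_or_lt with h0 | h0
  · obtain ⟨x, hx, -⟩ := hS 0 (by simp [eucNorm])
    have := (abs_nonneg _).trans (h x hx)
    linarith
  · set y := (eucNorm b)⁻¹ • b with hy
    have hy1 : eucNorm y ≤ 1 := by
      rw [hy, eucNorm_smul, abs_of_pos (inv_pos.2 h0), inv_mul_cancel₀ h0.ne']
    obtain ⟨x, hx, hxy⟩ := hS y hy1
    have e1 : b ⬝ᵥ y = eucNorm b := by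
      rw [hy, dotProduct_smul, ← eucNorm_sq_eq_dotProduct, smul_eq_mul]
      field_simp
    have e2 : b ⬝ᵥ y = b ⬝ᵥ (y - x) + b ⬝ᵥ x := by rw [← dotProduct_add, sub_add_cancel]
    have e3 := (le_abs_self _).trans (abs_dotProduct_le b (y - x))
    have e4 := (le_abs_self _).trans (h x hx)
    have e5 : eucNorm b * eucNorm (y - x) ≤ eucNorm b * (1 / 2) := by gcongr
    linarith

/-- Finite sets of test vectors controlling vectors and quadratic forms. -/
lemma exists_test_vectors (d : ℕ) : ∃ S₁ S₂ : Finset (Fin d → ℝ),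
    S₁.card ≤ 5 ^ d ∧ S₂.card ≤ 2 * 25 ^ d ∧ (∀ x ∈ S₁, ∑ k, x k ^ 2 ≤ 1) ∧
    (∀ x ∈ S₂, ∑ k, x k ^ 2 ≤ 1) ∧
    (∀ b t, (∀ x ∈ S₁, |b ⬝ᵥ x| ≤ t) → eucNorm b ≤ 2 * t) ∧
    ∀ (A : Matrix (Fin d) (Fin d) ℝ) (t : ℝ), Aᵀ = A → (∀ x ∈ S₂, |x ⬝ᵥ A *ᵥ x| ≤ t) →
      ∀ z, eucNorm (A *ᵥ z) ≤ 8 * t * eucNorm z := by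
  classical
  obtain ⟨S, hc, h1, h2⟩ := exists_net d
  set f : (Fin d → ℝ) × (Fin d → ℝ) → (Fin d → ℝ) := fun p => (1 / 2 : ℝ) • (p.1 + p.2)
  set f' : (Fin d → ℝ) × (Fin d → ℝ) → (Fin d → ℝ) := fun p => (1 / 2 : ℝ) • (p.1 - p.2)
  refine ⟨S, (S ×ˢ S).image f ∪ (S ×ˢ S).image f', hc, ?_,
    fun x hx => eucNorm_le_one_iff.1 (h1 x hx), ?_, fun b t h => eucNorm_le_of_net h2 h, ?_⟩
  · have hSS : (S ×ˢ S).card ≤ 25 ^ d := by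
      rw [Finset.card_product]
      calc _ ≤ 5 ^ d * 5 ^ d := Nat.mul_le_mul hc hc
        _ = _ := by rw [← mul_pow]; norm_num
    have := Finset.card_union_le ((S ×ˢ S).image f) ((S ×ˢ S).image f')
    have h3 : ((S ×ˢ S).image f).card ≤ _ := Finset.card_image_le
    have h4 : ((S ×ˢ S).image f').card ≤ _ := Finset.card_image_le
    omega
  · intro x hx
    rw [← eucNorm_le_one_iff]
    rcases Finset.mem_union.1 hx with hx | hx <;>
    · obtain ⟨p, hp, rfl⟩ := Finset.mem_image.1 hx
      obtain ⟨hp1, hp2⟩ := Finset.mem_product.1 hp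
      have a1 := h1 _ hp1
      have a2 := h1 _ hp2
      have a3 := eucNorm_add_le p.1 p.2
      have a4 := eucNorm_sub_le p.1 p.2
      simp only [f, f', eucNorm_smul]
      norm_num
      linarith
  · intro A t hA h
    have hpol : ∀ x ∈ S, ∀ y ∈ S, |x ⬝ᵥ A *ᵥ y| ≤ 2 * t := by
      intro x hx y hy
      have hxy : (x, y) ∈ S ×ˢ S := Finset.mem_product.2 ⟨hx, hy⟩
      have b1 := h (f (x, y)) (Finset.mem_union_left _ (Finset.mem_image_of_mem _ hxy))
      have b2 := h (f' (x, y)) (Finset.mem_union_right _ (Finset.mem_image_of_mem _ hxy))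
      have hsymm : y ⬝ᵥ A *ᵥ x = x ⬝ᵥ A *ᵥ y := by
        rw [dotProduct_mulVec, ← mulVec_transpose, hA, dotProduct_comm]
      have e : x ⬝ᵥ A *ᵥ y = f (x, y) ⬝ᵥ A *ᵥ f (x, y) - f' (x, y) ⬝ᵥ A *ᵥ f' (x, y) := by
        simp only [f, f', mulVec_smul, dotProduct_smul, smul_dotProduct, mulVec_add, mulVec_sub,
          dotProduct_add, dotProduct_sub, add_dotProduct, sub_dotProduct, smul_eq_mul, hsymm]
        ring
      rw [e]
      refine (abs_sub _ _).trans ?_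
      linarith
    have hone : ∀ x ∈ S, ∀ z, |x ⬝ᵥ A *ᵥ z| ≤ 4 * t * eucNorm z := by
      intro x hx z
      have e : ∀ z, x ⬝ᵥ A *ᵥ z = (A *ᵥ x) ⬝ᵥ z := fun z => by
        rw [dotProduct_mulVec, ← mulVec_transpose, hA]
      have c1 := eucNorm_le_of_net h2 (b := A *ᵥ x) (t := 2 * t) fun y hy => by
        rw [← e]; exact hpol x hx y hy
      rw [e]
      refine (abs_dotProduct_le _ _).trans ?_
      have := mul_le_mul_of_nonneg_right c1 (eucNorm_nonneg z)
      linarith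
    intro z
    have := eucNorm_le_of_net h2 (b := A *ᵥ z) (t := 4 * t * eucNorm z) fun x hx => by
      rw [dotProduct_comm]; exact hone x hx z
    linarith

end

/-! ### Perturbation of the leading eigenvector -/

/-- A truncated Neumann series, dominated by a geometric series. -/
lemma abs_le_of_neumann (K : ℕ) : ∀ {T : ℕ → ℝ} {Λ D W : ℝ}, 0 < Λ → 0 ≤ D →
    (∀ k < K, Λ * |T k| ≤ (Λ / 4) ^ k * D + |T (k + 1)|) → |T K| ≤ (Λ / 4) ^ K * W →
    Λ * |T 0| ≤ 2 * D + Λ * W / 4 ^ K := by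
  induction K with
  | zero =>
    intro T Λ D W hΛ hD _ hK
    simp only [pow_zero, one_mul, div_one] at hK ⊢
    nlinarith
  | succ K ih =>
    intro T Λ D W hΛ hD h hK
    have h1 := ih (T := fun k => T (k + 1)) (D := Λ / 4 * D) (W := Λ / 4 * W) hΛ (by positivity)
      (fun k hk => by
        have := h (k + 1) (by omega)
        rw [pow_succ] at this
        linarith) (by rw [pow_succ] at hK; linarith)
    have h2 := h 0 (by omega)
    simp only [zero_add, pow_zero, one_mul] at h1 h2
    have e : Λ * (Λ / 4 * W) / 4 ^ K = Λ * (Λ * W / 4 ^ (K + 1)) := by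
      rw [pow_succ]; field_simp
    rw [e] at h1
    have h3 : Λ * |T 1| ≤ Λ * (D / 2 + Λ * W / 4 ^ (K + 1)) := by linarith
    have h4 := le_of_mul_le_mul_left h3 hΛ
    linarith

section
variable {N d : ℕ}

/-- The weight of a row in the spectral matrix. -/
noncomputable def weight (s a : ℝ) (x : Fin d → ℝ) : ℝ := a ^ 2 + dev d s x

/-- The off-diagonal block of the spectral matrix. -/
noncomputable def crossVec (s : ℝ) (v : Fin N → ℝ) (g : Fin N → Fin d → ℝ) : Fin d → ℝ :=
  ∑ i, (weight s (v i) (g i) * v i) • g i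

/-- The lower diagonal block of the spectral matrix. -/
noncomputable def restMat (s : ℝ) (v : Fin N → ℝ) (g : Fin N → Fin d → ℝ) :
    Matrix (Fin d) (Fin d) ℝ :=
  ∑ i, weight s (v i) (g i) • vecMulVec (g i) (g i) - (3 * s) • 1

/-- The off-diagonal block without the contribution of row `j`. -/
noncomputable def looVec (s : ℝ) (v : Fin N → ℝ) (g : Fin N → Fin d → ℝ) (j : Fin N) : Fin d → ℝ :=
  crossVec s v g - (weight s (v j) (g j) * v j) • g j

/-- The lower diagonal block without the contribution of row `j`. -/
noncomputable def looMat (s : ℝ) (v : Fin N → ℝ) (g : Fin N → Fin d → ℝ) (j : Fin N) :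
    Matrix (Fin d) (Fin d) ℝ :=
  restMat s v g - weight s (v j) (g j) • vecMulVec (g j) (g j)

lemma gaussBasis_apply_zero (v : Fin N → ℝ) (g : Fin N → Fin d → ℝ) (i : Fin N) :
    gaussBasis (n := d + 1) v g i 0 = v i := by simp [gaussBasis, rowCat]

lemma gaussBasis_apply_succ (v : Fin N → ℝ) (g : Fin N → Fin d → ℝ) (i : Fin N) (k : Fin d) :
    gaussBasis (n := d + 1) v g i k.succ = g i k := by simp [gaussBasis, rowCat]

lemma gaussBasis_dotProduct (v : Fin N → ℝ) (g : Fin N → Fin d → ℝ) (i : Fin N)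
    (u : Fin (d + 1) → ℝ) :
    gaussBasis (n := d + 1) v g i ⬝ᵥ u = v i * u 0 + g i ⬝ᵥ Fin.tail u := by
  simp only [dotProduct, Fin.sum_univ_succ, gaussBasis_apply_zero, gaussBasis_apply_succ, Fin.tail]

lemma specMat_mulVec {n : ℕ} (Y : Matrix (Fin N) (Fin n) ℝ) (u : Fin n → ℝ) :
    specMat Y *ᵥ u = ∑ i, (((∑ j, (Y i j) ^ 2) - ((n : ℝ) - 1) / N) * (Y i ⬝ᵥ u)) • Y i -
      (3 / (N : ℝ)) • u := by
  simp only [specMat, sub_mulVec, sum_mulVec, smul_mulVec, vecMulVec_mulVec, one_mulVec]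
  congr 1
  refine Finset.sum_congr rfl fun i _ => ?_
  ext k
  simp [mul_assoc, mul_comm]

lemma specMat_gaussBasis_mulVec (v : Fin N → ℝ) (g : Fin N → Fin d → ℝ) (u : Fin (d + 1) → ℝ) :
    specMat (gaussBasis (n := d + 1) v g) *ᵥ u =
      ∑ i, (weight (N : ℝ)⁻¹ (v i) (g i) * (v i * u 0 + g i ⬝ᵥ Fin.tail u)) •
        gaussBasis (n := d + 1) v g i - (3 * (N : ℝ)⁻¹) • u := by
  rw [specMat_mulVec]
  congr 1
  refine Finset.sum_congr rfl fun i _ => ?_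
  rw [gaussBasis_dotProduct]
  congr 2
  simp only [Fin.sum_univ_succ, gaussBasis_apply_zero, gaussBasis_apply_succ, weight, dev]
  push_cast
  ring

lemma specMat_mulVec_zero (v : Fin N → ℝ) (g : Fin N → Fin d → ℝ) (u : Fin (d + 1) → ℝ) :
    (specMat (gaussBasis (n := d + 1) v g) *ᵥ u) 0 =
      (∑ i, weight (N : ℝ)⁻¹ (v i) (g i) * v i ^ 2 - 3 * (N : ℝ)⁻¹) * u 0 +
        crossVec (N : ℝ)⁻¹ v g ⬝ᵥ Fin.tail u := by
  rw [specMat_gaussBasis_mulVec]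
  simp only [Pi.sub_apply, Finset.sum_apply, Pi.smul_apply, smul_eq_mul, gaussBasis_apply_zero,
    crossVec, sum_dotProduct, smul_dotProduct, sub_mul, Finset.sum_mul]
  rw [sub_add_eq_add_sub, ← Finset.sum_add_distrib]
  congr 1
  exact Finset.sum_congr rfl fun i _ => by ring

lemma tail_specMat_mulVec (v : Fin N → ℝ) (g : Fin N → Fin d → ℝ) (u : Fin (d + 1) → ℝ) :
    Fin.tail (specMat (gaussBasis (n := d + 1) v g) *ᵥ u) =
      u 0 • crossVec (N : ℝ)⁻¹ v g + restMat (N : ℝ)⁻¹ v g *ᵥ Fin.tail u := by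
  rw [specMat_gaussBasis_mulVec, restMat, sub_mulVec, sum_mulVec]
  ext k
  simp only [Fin.tail, Pi.sub_apply, Pi.add_apply, Finset.sum_apply, Pi.smul_apply, smul_eq_mul,
    gaussBasis_apply_succ, crossVec, smul_mulVec, vecMulVec_mulVec, one_mulVec, Finset.mul_sum,
    op_smul_eq_smul]
  rw [← add_sub_assoc, ← Finset.sum_add_distrib]
  congr 1
  exact Finset.sum_congr rfl fun i _ => by ring

lemma isSymm_specMat {n : ℕ} (Y : Matrix (Fin N) (Fin n) ℝ) : (specMat Y).IsHermitian := by
  rw [IsHermitian, conjTranspose_eq_transpose_of_trivial]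
  simp only [specMat, transpose_sub, transpose_sum, transpose_smul, transpose_one,
    transpose_vecMulVec]

/-- The leading eigenvalue dominates every quadratic form. -/
lemma abs_diag_le_of_eigenvalues_le {n : ℕ} {M : Matrix (Fin n) (Fin n) ℝ} (hM : M.IsHermitian)
    {c : ℝ} (h : ∀ μ' : ℝ, (∃ w : Fin n → ℝ, w ≠ 0 ∧ M *ᵥ w = μ' • w) → |μ'| ≤ c) (i : Fin n) :
    |M i i| ≤ c := by
  have hk : ∀ k, |hM.eigenvalues k| ≤ c := fun k => h _ ⟨hM.eigenvectorBasis k, by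
    intro h0
    have h1 := hM.eigenvectorBasis.orthonormal.1 k
    have h2 : hM.eigenvectorBasis k = 0 := by ext l; exact congrFun h0 l
    rw [h2] at h1; simp at h1, hM.mulVec_eigenvectorBasis k⟩
  set U := (hM.eigenvectorUnitary : Matrix (Fin n) (Fin n) ℝ) with hU
  have e1 : M i i = ∑ k, hM.eigenvalues k * U i k ^ 2 := by
    conv_lhs => rw [hM.spectral_theorem]
    rw [Unitary.conjStarAlgAut_apply, Matrix.mul_apply]
    refine Finset.sum_congr rfl fun k _ => ?_
    simp [Matrix.mul_diagonal, ← hU]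
    ring
  have e2 : ∑ k, U i k ^ 2 = 1 := by
    have := congrFun (congrFun (mem_unitaryGroup_iff.1 hM.eigenvectorUnitary.2) i) i
    rw [← hU, Matrix.mul_apply, one_apply_eq] at this
    rw [← this]
    refine Finset.sum_congr rfl fun k _ => ?_
    rw [star_apply, star_trivial, sq]
  rw [e1]
  calc _ ≤ ∑ k, |hM.eigenvalues k * U i k ^ 2| := Finset.abs_sum_le_sum_abs _ _
    _ ≤ ∑ k, c * U i k ^ 2 := Finset.sum_le_sum fun k _ => by
        rw [abs_mul, abs_of_nonneg (sq_nonneg (U i k))]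
        exact mul_le_mul_of_nonneg_right (hk k) (sq_nonneg _)
    _ = c := by rw [← Finset.mul_sum, e2, mul_one]

lemma specMat_mul_orthogonal {n : ℕ} (Y : Matrix (Fin N) (Fin n) ℝ) {Q : Matrix (Fin n) (Fin n) ℝ}
    (hQ : Qᵀ * Q = 1) : specMat (Y * Q) = Qᵀ * specMat Y * Q := by
  have hQ' : Q * Qᵀ = 1 := mul_eq_one_comm.1 hQ
  have hrow : ∀ i, (Y * Q) i = Y i ᵥ* Q := fun i => by
    ext k; simp [Matrix.mul_apply, vecMul, dotProduct]
  have hn : ∀ i, ∑ j, (Y * Q) i j ^ 2 = ∑ j, Y i j ^ 2 := by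
    intro i
    have h : ∀ x : Fin n → ℝ, ∑ j, x j ^ 2 = x ⬝ᵥ x := fun x => by
      rw [dotProduct]; exact Finset.sum_congr rfl fun _ _ => by ring
    rw [h, h, hrow, ← dotProduct_mulVec, ← vecMul_transpose, vecMul_vecMul, hQ', vecMul_one]
  have hv : ∀ i, vecMulVec ((Y * Q) i) ((Y * Q) i) = Qᵀ * vecMulVec (Y i) (Y i) * Q := fun i => by
    rw [hrow, mul_vecMulVec, vecMulVec_mul, mulVec_transpose]
  simp only [specMat, hn, hv, Matrix.mul_sub, Matrix.sub_mul, Matrix.mul_sum, Matrix.sum_mul,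
    Matrix.mul_smul, Matrix.smul_mul, Matrix.mul_one, hQ]

lemma IsLeadingEigen.of_mul_orthogonal {n : ℕ} {Y : Matrix (Fin N) (Fin n) ℝ}
    {Q : Matrix (Fin n) (Fin n) ℝ} (hQ : Qᵀ * Q = 1) {u : Fin n → ℝ}
    (hu : IsLeadingEigen (specMat (Y * Q)) u) : IsLeadingEigen (specMat Y) (Q *ᵥ u) := by
  have hQ' : Q * Qᵀ = 1 := mul_eq_one_comm.1 hQ
  rw [specMat_mul_orthogonal Y hQ] at hu
  obtain ⟨h1, μ, h2, h3⟩ := hu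
  refine ⟨?_, μ, ?_, fun μ' ⟨w, hw, hw'⟩ => h3 μ' ⟨Qᵀ *ᵥ w, fun h0 => hw ?_, ?_⟩⟩
  · have e : eucNorm (Q *ᵥ u) ^ 2 = eucNorm u ^ 2 := by
      rw [eucNorm_sq_eq_dotProduct, eucNorm_sq_eq_dotProduct, dotProduct_mulVec, ← mulVec_transpose,
        mulVec_mulVec, hQ, one_mulVec]
    rw [h1, one_pow] at e
    exact (pow_eq_one_iff_of_nonneg (eucNorm_nonneg _) two_ne_zero).1 e
  · have := congrArg (Q *ᵥ ·) h2
    simp only [mulVec_mulVec, mulVec_smul] at this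
    rwa [← Matrix.mul_assoc, ← Matrix.mul_assoc, hQ', Matrix.one_mul, ← mulVec_mulVec] at this
  · have := congrArg (Q *ᵥ ·) h0
    simpa only [mulVec_mulVec, hQ', one_mulVec, mulVec_zero] using this
  · rw [mulVec_mulVec, Matrix.mul_assoc, hQ', Matrix.mul_one, ← mulVec_mulVec, hw', mulVec_smul]

/-- Deterministic entrywise bound for the leading eigenvector. -/
lemma entrywise_bound {v : Fin N → ℝ} {g : Fin N → Fin d → ℝ} {β ε κ : ℝ} (hκ : 0 ≤ κ)
    (hβ : 64 * ε ≤ |β|)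
    (h00 : |∑ i, weight (N : ℝ)⁻¹ (v i) (g i) * v i ^ 2 - 3 * (N : ℝ)⁻¹ - β| ≤ ε)
    (hb : eucNorm (crossVec (N : ℝ)⁻¹ v g) ≤ ε)
    (hA : ∀ z, eucNorm (restMat (N : ℝ)⁻¹ v g *ᵥ z) ≤ ε * eucNorm z)
    (hwg : ∀ j, |weight (N : ℝ)⁻¹ (v j) (g j)| * eucNorm (g j) ^ 2 ≤ ε)
    (hwv : ∀ j, |weight (N : ℝ)⁻¹ (v j) (g j) * v j| * eucNorm (g j) ≤ ε)
    (hloo : ∀ j, ∀ k < N, |g j ⬝ᵥ looMat (N : ℝ)⁻¹ v g j ^ k *ᵥ looVec (N : ℝ)⁻¹ v g j| ≤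
      κ * eucNorm (looMat (N : ℝ)⁻¹ v g j ^ k *ᵥ looVec (N : ℝ)⁻¹ v g j))
    (hg : ∀ j, eucNorm (g j) ≤ κ * 4 ^ N) {u : Fin (d + 1) → ℝ}
    (hu : IsLeadingEigen (specMat (gaussBasis (n := d + 1) v g)) u) :
    ∃ σ : ℝ, (σ = 1 ∨ σ = -1) ∧ ∀ j : Fin N,
      |β| * |σ * (gaussBasis (n := d + 1) v g *ᵥ u) j - v j| ≤ 20 * ε * (|v j| + κ) := by
  have hε : 0 ≤ ε := (abs_nonneg _).trans h00
  obtain ⟨hu1, μ, hμ, hlead⟩ := hu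
  set M := specMat (gaussBasis (n := d + 1) v g) with hM
  set b := crossVec (N : ℝ)⁻¹ v g with hbdef
  set A := restMat (N : ℝ)⁻¹ v g with hAdef
  set w := Fin.tail u with hw
  set u0 := u 0 with hu0
  rcases (abs_nonneg β).eq_or_lt with hβ0 | hβ0
  · refine ⟨1, Or.inl rfl, fun j => ?_⟩
    rw [← hβ0, zero_mul]; positivity
  -- the eigenvalue is bounded below
  have hμβ : |β| / 2 ≤ |μ| := by
    have h1 := abs_diag_le_of_eigenvalues_le (isSymm_specMat _) hlead 0
    have h2 := specMat_mulVec_zero v g (Pi.single 0 1)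
    rw [mulVec_single_one] at h2
    have h3 : Fin.tail (Pi.single 0 1 : Fin (d + 1) → ℝ) = 0 := by
      ext k; simp [Fin.tail]
    rw [h3, dotProduct_zero, add_zero, Pi.single_eq_same, mul_one] at h2
    simp only [col_apply] at h2
    rw [← h2] at h00
    have h4 := abs_sub_abs_le_abs_sub β (M 0 0)
    rw [abs_sub_comm] at h4
    linarith
  have hμ0 : 0 < |μ| := by linarith
  have hnorm : u0 ^ 2 + eucNorm w ^ 2 = 1 := by
    have := eucNorm_sq u
    rw [hu1, Fin.sum_univ_succ] at this
    rw [eucNorm_sq]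
    simp only [hw, hu0, Fin.tail]
    linarith
  have hw0 := eucNorm_nonneg w
  have hw1 : eucNorm w ≤ 1 := by nlinarith [sq_nonneg u0]
  have hu01 : |u0| ≤ 1 := by rw [abs_le]; constructor <;> nlinarith [sq_nonneg (eucNorm w)]
  have heig : μ • w = u0 • b + A *ᵥ w := by
    rw [← tail_specMat_mulVec, ← hM, hμ]; rfl
  have hwle : |β| * eucNorm w ≤ 4 * ε := by
    have h1 : |μ| * eucNorm w ≤ 2 * ε := by
      rw [← eucNorm_smul, heig]
      refine (eucNorm_add_le _ _).trans ?_
      rw [eucNorm_smul]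
      have := hA w
      nlinarith [eucNorm_nonneg b]
    nlinarith
  refine ⟨if 0 ≤ u0 then 1 else -1, by split_ifs <;> simp, fun j => ?_⟩
  set σ : ℝ := if 0 ≤ u0 then 1 else -1 with hσ
  have hσu : σ * u0 = |u0| := by
    rw [hσ]; split_ifs with h
    · rw [abs_of_nonneg h, one_mul]
    · rw [abs_of_neg (not_le.1 h), neg_one_mul]
  have hσ1 : |σ| = 1 := by rw [hσ]; split_ifs <;> simp
  -- the row is nearly orthogonal to the tail
  set a := weight (N : ℝ)⁻¹ (v j) (g j) with ha
  set H := looMat (N : ℝ)⁻¹ v g j with hH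
  set bj := looVec (N : ℝ)⁻¹ v g j with hbj
  set y := g j ⬝ᵥ w with hy
  set z := v j * u0 + y with hz
  set c := u0 • bj + (a * z) • g j with hc
  have hHz : ∀ x, H *ᵥ x = A *ᵥ x - (a * (g j ⬝ᵥ x)) • g j := fun x => by
    rw [hH, looMat, sub_mulVec, smul_mulVec, vecMulVec_mulVec, op_smul_eq_smul, smul_smul]
  have heig' : μ • w = c + H *ᵥ w := by
    rw [heig, hHz, hc, hbj, looVec, ← hbdef, ← ha, ← hy, hz]
    ext k
    simp only [Pi.add_apply, Pi.sub_apply, Pi.smul_apply, smul_eq_mul]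
    ring
  have hHn : ∀ x, eucNorm (H *ᵥ x) ≤ 2 * ε * eucNorm x := fun x => by
    rw [hHz]
    refine (eucNorm_sub_le _ _).trans ?_
    rw [eucNorm_smul, abs_mul]
    have h1 : |a| * |g j ⬝ᵥ x| * eucNorm (g j) ≤ |a| * (eucNorm (g j) * eucNorm x) * eucNorm (g j) := by
      gcongr
      · exact eucNorm_nonneg _
      · exact abs_dotProduct_le _ _
    have h2 := mul_le_mul_of_nonneg_right (hwg j) (eucNorm_nonneg x)
    have h3 := hA x
    nlinarith
  have hHk : ∀ k x, eucNorm (H ^ k *ᵥ x) ≤ (2 * ε) ^ k * eucNorm x := by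
    intro k
    induction k with
    | zero => intro x; simp
    | succ k ih =>
      intro x
      rw [pow_succ, ← mulVec_mulVec]
      refine (ih _).trans ?_
      have := mul_le_mul_of_nonneg_left (hHn x) (show 0 ≤ (2 * ε) ^ k by positivity)
      rw [pow_succ]; linarith
  have hbjn : eucNorm bj ≤ 2 * ε := by
    rw [hbj, looVec]
    refine (eucNorm_sub_le _ _).trans ?_
    rw [eucNorm_smul]
    have := hwv j
    linarith
  have hq : 2 * ε ≤ |μ| / 4 := by linarith
  have hgc : ∀ k < N, |g j ⬝ᵥ H ^ k *ᵥ c| ≤ (|μ| / 4) ^ k * (2 * ε * κ + ε * |z|) := by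
    intro k hk
    have e : g j ⬝ᵥ H ^ k *ᵥ c = u0 * (g j ⬝ᵥ H ^ k *ᵥ bj) + z * (a * (g j ⬝ᵥ H ^ k *ᵥ g j)) := by
      rw [hc, mulVec_add, dotProduct_add, mulVec_smul, mulVec_smul, dotProduct_smul,
        dotProduct_smul, smul_eq_mul, smul_eq_mul]
      ring
    have h1 : |g j ⬝ᵥ H ^ k *ᵥ bj| ≤ (2 * ε) ^ k * (2 * ε * κ) := by
      refine (hloo j k hk).trans ?_
      have h2 := (hHk k bj).trans (mul_le_mul_of_nonneg_left hbjn (by positivity))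
      have := mul_le_mul_of_nonneg_left h2 hκ
      linarith
    have h2 : |a * (g j ⬝ᵥ H ^ k *ᵥ g j)| ≤ (2 * ε) ^ k * ε := by
      rw [abs_mul]
      have h3 := (abs_dotProduct_le (g j) (H ^ k *ᵥ g j)).trans
        (mul_le_mul_of_nonneg_left (hHk k (g j)) (eucNorm_nonneg _))
      have h4 := mul_le_mul_of_nonneg_left h3 (abs_nonneg a)
      have h5 := mul_le_mul_of_nonneg_left (hwg j) (show 0 ≤ (2 * ε) ^ k by positivity)
      linarith
    have h6 : (2 * ε) ^ k * (2 * ε * κ + ε * |z|) ≤ (|μ| / 4) ^ k * (2 * ε * κ + ε * |z|) := by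
      gcongr
    refine le_trans ?_ h6
    rw [e]
    refine (abs_add_le _ _).trans ?_
    rw [abs_mul, abs_mul z]
    have h7 := mul_le_mul hu01 h1 (abs_nonneg _) zero_le_one
    have h8 := mul_le_mul_of_nonneg_left h2 (abs_nonneg z)
    linarith
  have hneu := abs_le_of_neumann N (T := fun k => g j ⬝ᵥ H ^ k *ᵥ w) (Λ := |μ|)
    (D := 2 * ε * κ + ε * |z|) (W := eucNorm (g j) * eucNorm w) hμ0 (by positivity)
    (fun k hk => by
      have h1 : μ * (g j ⬝ᵥ H ^ k *ᵥ w) = g j ⬝ᵥ H ^ k *ᵥ c + g j ⬝ᵥ H ^ (k + 1) *ᵥ w := by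
        rw [← smul_eq_mul, ← dotProduct_smul, ← mulVec_smul, heig', mulVec_add, dotProduct_add,
          mulVec_mulVec, pow_succ]
      rw [← abs_mul, h1]
      exact (abs_add_le _ _).trans (add_le_add_left (hgc k hk) _))
    (by
      refine (abs_dotProduct_le _ _).trans ?_
      have h1 := hHk N w
      have h2 : (2 * ε) ^ N * eucNorm w ≤ (|μ| / 4) ^ N * eucNorm w := by gcongr
      have := mul_le_mul_of_nonneg_left (h1.trans h2) (eucNorm_nonneg (g j))
      linarith)
  simp only [pow_zero, one_mulVec] at hneu
  rw [← hy] at hneu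
  have hlast : |μ| * (eucNorm (g j) * eucNorm w) / 4 ^ N ≤ |μ| * (κ * eucNorm w) := by
    rw [div_le_iff₀ (by positivity)]
    have := mul_le_mul_of_nonneg_right (hg j) hw0
    have := mul_le_mul_of_nonneg_left this hμ0.le
    linarith
  have hzle : |z| ≤ |v j| + |y| := by
    rw [hz]
    refine (abs_add_le _ _).trans ?_
    rw [abs_mul]
    linarith [mul_le_mul_of_nonneg_left hu01 (abs_nonneg (v j))]
  have hyfin : |β| * |y| ≤ 8 * ε * |v j| + 16 * ε * κ := by
    have h1 : |μ| * (|y| - κ * eucNorm w) ≤ 4 * ε * κ + 2 * ε * |v j| + 2 * ε * |y| := by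
      have hz' := mul_le_mul_of_nonneg_left hzle hε
      linarith
    have h2 : |β| / 2 * (|y| - κ * eucNorm w) ≤ 4 * ε * κ + 2 * ε * |v j| + 2 * ε * |y| := by
      rcases le_or_gt 0 (|y| - κ * eucNorm w) with h | h
      · exact (mul_le_mul_of_nonneg_right hμβ h).trans h1
      · have h3 : |β| / 2 * (|y| - κ * eucNorm w) ≤ 0 := by nlinarith
        have : 0 ≤ 4 * ε * κ + 2 * ε * |v j| + 2 * ε * |y| := by positivity
        linarith
    have h3 : κ * (|β| * eucNorm w) ≤ κ * (4 * ε) := mul_le_mul_of_nonneg_left hwle hκ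
    have h4 := mul_le_mul_of_nonneg_right hβ (abs_nonneg y)
    have h5 : 0 ≤ ε * |v j| := by positivity
    have h6 : 0 ≤ ε * κ := by positivity
    linarith
  have hrow : (gaussBasis (n := d + 1) v g *ᵥ u) j = z := by
    rw [hz, hy, hu0, hw, ← gaussBasis_dotProduct]; rfl
  rw [hrow]
  have e1 : σ * z - v j = (|u0| - 1) * v j + σ * y := by rw [hz, ← hσu]; ring
  have h1 : |σ * z - v j| ≤ (1 - |u0|) * |v j| + |y| := by
    rw [e1]
    refine (abs_add_le _ _).trans ?_
    rw [abs_mul, abs_mul, hσ1, one_mul, abs_of_nonpos (by linarith : |u0| - 1 ≤ 0)]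
    linarith
  have h2 : 1 - |u0| ≤ eucNorm w := by
    have : |u0| ^ 2 = u0 ^ 2 := sq_abs u0
    nlinarith [abs_nonneg u0]
  have h3 : |β| * ((1 - |u0|) * |v j|) ≤ 4 * ε * |v j| := by
    have h4 := mul_le_mul_of_nonneg_left h2 hβ0.le
    have := mul_le_mul_of_nonneg_right (h4.trans hwle) (abs_nonneg (v j))
    linarith
  have h4 := mul_le_mul_of_nonneg_left h1 hβ0.le
  have h5 : 0 ≤ ε * |v j| := by positivity
  have h6 : 0 ≤ ε * κ := by positivity
  linarith

end

/-! ### Probability of the individual deviation events -/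

section
variable {N d n : ℕ} {s : NNReal} {v : Fin N → ℝ} {L τ t : ℝ}

/-- Compatibility of the truncation level `τ` and of the deviation scale `t` with the parameters
of the model. -/
structure Scales (N n : ℕ) (s : NNReal) (v : Fin N → ℝ) (L τ t : ℝ) : Prop where
  s_pos : 0 < s
  one_le_n : 1 ≤ n
  one_le_L : 1 ≤ L
  t_pos : 0 < t
  tau_pos : 0 < τ
  tau_sq : 4096 * n * L * (s : ℝ) ^ 2 ≤ τ ^ 2
  tau_le : 64 * L * s ≤ τ
  sup_le : ∀ i, 64 * (n + L) * v i ^ 2 * s ≤ t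
  four_le : 2 ^ 13 * (n * L) * (∑ i, v i ^ 4) * (s : ℝ) ^ 2 ≤ t ^ 2
  six_le : 8 * (n + L) * (∑ i, v i ^ 6) * s ≤ t ^ 2
  two_le : 64 * (n + L) * (∑ i, v i ^ 2) * τ ^ 2 * s ≤ t ^ 2 ∨
    2 ^ 28 * (n + L) * n * (∑ i, v i ^ 2) * (s : ℝ) ^ 3 ≤ t ^ 2 ∧
      ∀ i, 64 * (n + L) * |v i| * τ * √(s : ℝ) ≤ t
  zero_le : 2 ^ 28 * (n + L) * n * N * (s : ℝ) ^ 4 ≤ t ^ 2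
  prod_le : 128 * (n + L) * τ * s ≤ t

lemma add_le_two_mul_mul {n : ℕ} {L : ℝ} (hn : 1 ≤ n) (hL : 1 ≤ L) : n + L ≤ 2 * (n * L) := by
  have : (1 : ℝ) ≤ n := by exact_mod_cast hn
  nlinarith [mul_nonneg (sub_nonneg.2 this) (sub_nonneg.2 hL)]

lemma Scales.measure_dev (H : Scales N n s v L τ t) (hd : d ≤ n) :
    gaussVec d s {g | τ ≤ |dev d s g|} ≤ ENNReal.ofReal (2 * Real.exp (-(4 * L))) := by
  have hL := H.one_le_L
  exact measure_dev_ge_le H.s_pos hd H.tau_pos (by linarith) (by linarith [H.tau_sq])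
    (by linarith [H.tau_le])

lemma Scales.measure_sum_sq_mul_dev (H : Scales N n s v L τ t) (hd : d ≤ n) :
    iidGaussVec N d s {g | t ≤ |∑ i, v i ^ 2 * dev d s (g i)|} ≤
      ENNReal.ofReal (2 * Real.exp (-(4 * L))) := by
  have hL := H.one_le_L
  have ht := H.t_pos
  have hs : (0 : ℝ) < s := by exact_mod_cast H.s_pos
  refine measure_sum_abs_ge_le (f := fun i g => v i ^ 2 * dev d s g)
    (V := fun i => (v i ^ 2) ^ 2 * (256 * n * (s : ℝ) ^ 2)) ht (by linarith) ?_ fun i θ hθ => ?_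
  · have h := H.four_le
    have h0 : 0 ≤ n * L * (∑ i, v i ^ 4) * (s : ℝ) ^ 2 := by positivity
    rw [← Finset.sum_mul]
    simp only [← pow_mul]
    norm_num at h ⊢
    linarith
  · refine (mgfLe_dev H.s_pos hd ?_).const_mul
    rw [abs_mul, hθ, abs_of_nonneg (sq_nonneg _)]
    have h := H.sup_le i
    have h0 : 0 ≤ 64 * n * v i ^ 2 * (s : ℝ) := by positivity
    have e : 2 * (4 * L) / t * v i ^ 2 * s = (8 * L * v i ^ 2 * s) / t := by ring
    rw [e, div_le_iff₀ ht]
    linarith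

lemma Scales.measure_sum_cube_mul (H : Scales N n s v L τ t) {x : Fin d → ℝ}
    (hx : ∑ k, x k ^ 2 ≤ 1) :
    iidGaussVec N d s {g | t ≤ |∑ i, v i ^ 3 * (g i ⬝ᵥ x)|} ≤
      ENNReal.ofReal (2 * Real.exp (-(4 * (n + L)))) := by
  have hL := H.one_le_L
  refine measure_sum_abs_ge_le (f := fun i g => v i ^ 3 * (g ⬝ᵥ x))
    (V := fun i => (v i ^ 3) ^ 2 * (s / 2)) H.t_pos (by positivity) ?_ fun i θ hθ => ?_
  · have h := H.six_le
    rw [← Finset.sum_mul]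
    simp only [← pow_mul]
    norm_num at h ⊢
    linarith
  · exact (mgfLe_dotProduct hx _).const_mul

lemma Scales.measure_sum_mul_truncDev (H : Scales N n s v L τ t) (hd : d ≤ n) {x : Fin d → ℝ}
    (hx : ∑ k, x k ^ 2 ≤ 1) :
    iidGaussVec N d s {g | t ≤ |∑ i, v i * (truncDev d s τ (g i) * (g i ⬝ᵥ x))|} ≤
      ENNReal.ofReal (2 * Real.exp (-(4 * (n + L)))) := by
  have hL := H.one_le_L
  have ht := H.t_pos
  have hsub := subGauss_dotProduct H.s_pos hx
  have hn : (0 : ℝ) < n := by exact_mod_cast H.one_le_n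
  rcases H.two_le with h | ⟨h, hi⟩
  · refine measure_sum_abs_ge_le (f := fun i g => v i * (truncDev d s τ g * (g ⬝ᵥ x)))
      (V := fun i => v i ^ 2 * (4 * τ ^ 2 * s)) ht (by positivity) ?_ fun i θ hθ => ?_
    · rw [← Finset.sum_mul]
      linarith
    · exact (hsub.mgfLe_mul measurable_truncDev (abs_truncDev_le H.tau_pos.le)
        (integral_truncDev_mul_dotProduct x) _).const_mul
  · obtain ⟨h4, h4'⟩ := integral_dev_pow_four H.s_pos hd H.one_le_n
    refine measure_sum_abs_ge_le (f := fun i g => v i * (truncDev d s τ g * (g ⬝ᵥ x)))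
      (V := fun i => v i ^ 2 * (2 ^ 24 * n * (s : ℝ) ^ 3)) ht (by positivity) ?_ fun i θ hθ => ?_
    · rw [← Finset.sum_mul]
      norm_num at h ⊢
      linarith
    · refine (hsub.mgfLe_mul_of_small hn measurable_truncDev (abs_truncDev_le H.tau_pos.le)
        abs_truncDev_le_abs_dev h4 h4' (integral_truncDev_mul_dotProduct x) ?_).const_mul
      rw [abs_mul, hθ]
      have e : 2 * (4 * (n + L)) / t * |v i| * τ * √(s : ℝ) =
          (8 * (n + L) * |v i| * τ * √(s : ℝ)) / t := by ring
      rw [e, div_le_iff₀ ht]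
      linarith [hi i]

lemma Scales.measure_sum_sq_mul_sq_sub (H : Scales N n s v L τ t) {x : Fin d → ℝ}
    (hx : ∑ k, x k ^ 2 ≤ 1) :
    iidGaussVec N d s {g | t ≤ |∑ i, v i ^ 2 * ((g i ⬝ᵥ x) ^ 2 - s * ∑ k, x k ^ 2)|} ≤
      ENNReal.ofReal (2 * Real.exp (-(4 * (n + L)))) := by
  have hL := H.one_le_L
  have ht := H.t_pos
  have hsub := subGauss_dotProduct H.s_pos hx
  rw [← integral_dotProduct_sq]
  refine measure_sum_abs_ge_le
    (f := fun i g => v i ^ 2 * ((g ⬝ᵥ x) ^ 2 - ∫ g, (g ⬝ᵥ x) ^ 2 ∂(gaussVec d s)))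
    (V := fun i => (v i ^ 2) ^ 2 * (256 * (s : ℝ) ^ 2)) ht (by positivity) ?_ fun i θ hθ => ?_
  · have h := H.four_le
    have h0 : 0 ≤ (∑ i, v i ^ 4) * (s : ℝ) ^ 2 := by positivity
    have h1 := mul_le_mul_of_nonneg_right (add_le_two_mul_mul H.one_le_n hL) h0
    rw [← Finset.sum_mul]
    simp only [← pow_mul]
    norm_num at h ⊢
    linarith
  · refine (hsub.mgfLe_sq_sub ?_).const_mul
    rw [abs_mul, hθ, abs_of_nonneg (sq_nonneg _)]
    have e : 2 * (4 * (n + L)) / t * v i ^ 2 * s = (8 * (n + L) * v i ^ 2 * s) / t := by ring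
    rw [e, div_le_iff₀ ht]
    linarith [H.sup_le i]

lemma Scales.measure_sum_truncDev_mul_sq (H : Scales N n s v L τ t) (hd : d ≤ n)
    {x : Fin d → ℝ} (hx : ∑ k, x k ^ 2 ≤ 1) :
    iidGaussVec N d s {g | t ≤ |∑ i, (truncDev d s τ (g i) * (g i ⬝ᵥ x) ^ 2 -
        ∫ y, truncDev d s τ y * (y ⬝ᵥ x) ^ 2 ∂(gaussVec d s))|} ≤
      ENNReal.ofReal (2 * Real.exp (-(4 * (n + L)))) := by
  have hL := H.one_le_L
  have ht := H.t_pos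
  have hsub := subGauss_dotProduct H.s_pos hx
  have hn : (0 : ℝ) < n := by exact_mod_cast H.one_le_n
  obtain ⟨h4, h4'⟩ := integral_dev_pow_four H.s_pos hd H.one_le_n
  refine measure_sum_abs_ge_le
    (f := fun i g => truncDev d s τ g * (g ⬝ᵥ x) ^ 2 -
      ∫ y, truncDev d s τ y * (y ⬝ᵥ x) ^ 2 ∂(gaussVec d s))
    (V := fun i => 2 ^ 24 * n * (s : ℝ) ^ 4) ht (by positivity) ?_ fun i θ hθ => ?_
  · have h := H.zero_le
    rw [Finset.sum_const, Finset.card_univ, Fintype.card_fin, nsmul_eq_mul]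
    norm_num at h ⊢
    linarith
  · refine hsub.mgfLe_mul_sq_sub hn measurable_truncDev (abs_truncDev_le H.tau_pos.le)
      abs_truncDev_le_abs_dev h4 h4' ?_
    rw [hθ]
    have e : 2 * (4 * (n + L)) / t * τ * s = (8 * (n + L) * τ * s) / t := by ring
    rw [e, div_le_iff₀ ht]
    linarith [H.prod_le]

lemma measure_dotProduct_gt_le (hs : 0 < s) (hL : 1 ≤ L) (w : Fin d → ℝ) :
    gaussVec d s {g | 4 * √(L * s) * eucNorm w < |g ⬝ᵥ w|} ≤
      ENNReal.ofReal (2 * Real.exp (-(4 * L))) := by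
  have hs' : (0 : ℝ) < s := by exact_mod_cast hs
  have hκ : 0 < 4 * √(L * s) := by positivity
  rcases (eucNorm_nonneg w).eq_or_lt with h0 | h0
  · rw [(eucNorm_eq_zero).1 h0.symm]
    have : {g : Fin d → ℝ | 4 * √(L * s) * eucNorm (0 : Fin d → ℝ) < |g ⬝ᵥ 0|} = ∅ := by
      ext g
      simp only [dotProduct_zero, abs_zero, Set.mem_ofPred_eq, Set.mem_empty_iff_false, iff_false,
        not_lt]
      exact mul_nonneg hκ.le (eucNorm_nonneg _)
    rw [this, measure_empty]
    exact zero_le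
  · set x : Fin d → ℝ := (eucNorm w)⁻¹ • w
    have hx : ∑ k, x k ^ 2 ≤ 1 := by
      rw [← eucNorm_sq, eucNorm_smul, abs_of_pos (inv_pos.2 h0), inv_mul_cancel₀ h0.ne', one_pow]
    refine le_trans (measure_mono ?_) (measure_abs_ge_le (μ := gaussVec d s)
      (f := fun g => g ⬝ᵥ x) (t := 4 * √(L * s)) (p := 4 * L) (V := s / 2) hκ (by linarith) ?_
      (mgfLe_dotProduct hx _) (mgfLe_dotProduct hx _))
    · intro g hg
      simp only [Set.mem_ofPred_eq] at hg ⊢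
      rw [dotProduct_smul, smul_eq_mul, abs_mul, abs_of_pos (inv_pos.2 h0), inv_mul_eq_div,
        le_div_iff₀ h0]
      exact hg.le
    · rw [mul_pow, Real.sq_sqrt (by positivity)]
      nlinarith [mul_pos (zero_lt_one.trans_le hL) hs']

lemma measure_row_dotProduct_gt_le (hs : 0 < s) (hL : 1 ≤ L) (j : Fin N)
    {W : (Fin N → Fin d → ℝ) → Fin d → ℝ} (hW : Measurable W)
    (hWj : ∀ g, W (Function.update g j 0) = W g) :
    iidGaussVec N d s {g | 4 * √(L * s) * eucNorm (W g) < |g j ⬝ᵥ W g|} ≤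
      ENNReal.ofReal (2 * Real.exp (-(4 * L))) := by
  obtain ⟨M, rfl⟩ : ∃ M, N = M + 1 := ⟨N - 1, by have := j.pos; omega⟩
  have hmp := measurePreserving_piFinSuccAbove (fun _ : Fin (M + 1) => gaussVec d s) j
  set e := MeasurableEquiv.piFinSuccAbove (fun _ : Fin (M + 1) => Fin d → ℝ) j
  set W' : (Fin M → Fin d → ℝ) → Fin d → ℝ := fun b => W (e.symm (0, b))
  have hW' : Measurable W' := hW.comp (e.symm.measurable.comp measurable_prodMk_left)
  have hWe : ∀ g, W g = W' (e g).2 := fun g => by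
    rw [← hWj g]
    congr 1
    rw [MeasurableEquiv.eq_symm_apply]
    ext1
    · exact Function.update_self j 0 g
    · funext i
      exact Function.update_of_ne (Fin.succAbove_ne j i) 0 g
  set S : Set ((Fin d → ℝ) × (Fin M → Fin d → ℝ)) :=
    {p | 4 * √(L * s) * eucNorm (W' p.2) < |p.1 ⬝ᵥ W' p.2|}
  have hS : MeasurableSet S := by
    refine measurableSet_lt ?_ ?_
    · unfold eucNorm; fun_prop
    · unfold dotProduct; fun_prop
  have hpre : {g : Fin (M + 1) → Fin d → ℝ | 4 * √(L * s) * eucNorm (W g) < |g j ⬝ᵥ W g|} =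
      e ⁻¹' S := by
    ext g
    simp only [Set.mem_ofPred_eq, Set.mem_preimage, S, hWe g]
    rfl
  rw [hpre, iidGaussVec, hmp.measure_preimage hS.nullMeasurableSet, Measure.prod_apply_symm hS]
  refine (lintegral_mono fun b => measure_dotProduct_gt_le hs hL (W' b)).trans ?_
  rw [lintegral_const, measure_univ, mul_one]

lemma measurable_looMat_pow_mulVec (j : Fin N) (k : ℕ) {s : ℝ} : Measurable
    fun g : Fin N → Fin d → ℝ => looMat s v g j ^ k *ᵥ looVec s v g j := by
  have hw : ∀ i, Continuous fun g : Fin N → Fin d → ℝ => weight s (v i) (g i) := fun i => by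
    unfold weight dev; fun_prop
  have hm : Continuous fun g : Fin N → Fin d → ℝ => looMat s v g j := by
    unfold looMat restMat
    refine (Continuous.sub (continuous_finsetSum _ fun i _ => ?_) continuous_const).sub ?_
    · exact (hw i).smul ((continuous_apply i).matrix_vecMulVec (continuous_apply i))
    · exact (hw j).smul ((continuous_apply j).matrix_vecMulVec (continuous_apply j))
  have hv : Continuous fun g : Fin N → Fin d → ℝ => looVec s v g j := by
    unfold looVec crossVec
    fun_prop
  exact ((hm.pow k).matrix_mulVec hv).measurable

lemma looMat_update (s : ℝ) (g : Fin N → Fin d → ℝ) (j : Fin N) :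
    looMat s v (Function.update g j 0) j = looMat s v g j := by
  have h : ∀ g : Fin N → Fin d → ℝ, looMat s v g j =
      ∑ i ∈ Finset.univ.erase j, weight s (v i) (g i) • vecMulVec (g i) (g i) - (3 * s) • 1 :=
    fun g => by
      rw [looMat, restMat, ← Finset.add_sum_erase _ _ (Finset.mem_univ j)]
      abel
  rw [h, h]
  congr 1
  refine Finset.sum_congr rfl fun i hi => ?_
  rw [Function.update_of_ne (Finset.ne_of_mem_erase hi)]

lemma looVec_update (s : ℝ) (g : Fin N → Fin d → ℝ) (j : Fin N) :
    looVec s v (Function.update g j 0) j = looVec s v g j := by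
  have h : ∀ g : Fin N → Fin d → ℝ, looVec s v g j =
      ∑ i ∈ Finset.univ.erase j, (weight s (v i) (g i) * v i) • g i := fun g => by
    rw [looVec, crossVec, ← Finset.add_sum_erase _ _ (Finset.mem_univ j)]
    abel
  rw [h, h]
  refine Finset.sum_congr rfl fun i hi => ?_
  rw [Function.update_of_ne (Finset.ne_of_mem_erase hi)]

lemma measure_looVec_dotProduct_gt_le (hs : 0 < s) (hL : 1 ≤ L) (j : Fin N) (k : ℕ) :
    iidGaussVec N d s {g | 4 * √(L * s) * eucNorm (looMat s v g j ^ k *ᵥ looVec s v g j) <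
      |g j ⬝ᵥ looMat s v g j ^ k *ᵥ looVec s v g j|} ≤
      ENNReal.ofReal (2 * Real.exp (-(4 * L))) :=
  measure_row_dotProduct_gt_le hs hL j (measurable_looMat_pow_mulVec j k) fun g => by
    rw [looMat_update, looVec_update]

end

/-! ### The good event -/

section
variable {N d n : ℕ} {s : NNReal} {v : Fin N → ℝ} {L τ t : ℝ}

/-- The deviation estimates for the Gaussian rows used in the analysis of the eigenvector. -/
structure GoodRows (n : ℕ) (s : NNReal) (v : Fin N → ℝ) (L τ t : ℝ) (g : Fin N → Fin d → ℝ) :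
    Prop where
  abs_dev_le : ∀ i, |dev d s (g i)| ≤ τ
  diag_le : |∑ i, v i ^ 2 * dev d s (g i)| ≤ t
  cross_le : eucNorm (crossVec s v g) ≤ 4 * t
  rest_le : ∀ z, eucNorm (restMat s v g *ᵥ z) ≤
    8 * (2 * t + 2 ^ 24 * (√(n : ℝ) * s * √(s : ℝ)) + |∑ i, v i ^ 2 - 1| * s) * eucNorm z
  loo_le : ∀ j, ∀ k < N, |g j ⬝ᵥ looMat s v g j ^ k *ᵥ looVec s v g j| ≤
    4 * √(L * s) * eucNorm (looMat s v g j ^ k *ᵥ looVec s v g j)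

lemma crossVec_dotProduct {s : ℝ} (g : Fin N → Fin d → ℝ) (x : Fin d → ℝ)
    (hg : ∀ i, |dev d s (g i)| ≤ τ) :
    crossVec s v g ⬝ᵥ x = ∑ i, v i ^ 3 * (g i ⬝ᵥ x) +
      ∑ i, v i * (truncDev d s τ (g i) * (g i ⬝ᵥ x)) := by
  rw [crossVec, sum_dotProduct, ← Finset.sum_add_distrib]
  refine Finset.sum_congr rfl fun i _ => ?_
  rw [smul_dotProduct, smul_eq_mul, weight, truncDev, if_pos (hg i)]
  ring

lemma restMat_transpose {s : ℝ} (g : Fin N → Fin d → ℝ) : (restMat s v g)ᵀ = restMat s v g := by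
  simp only [restMat, transpose_sub, transpose_sum, transpose_smul, transpose_vecMulVec,
    transpose_one]

lemma dotProduct_restMat_mulVec {s : ℝ} (g : Fin N → Fin d → ℝ) (x : Fin d → ℝ)
    (hg : ∀ i, |dev d s (g i)| ≤ τ) (E : ℝ) :
    x ⬝ᵥ restMat s v g *ᵥ x =
      ∑ i, v i ^ 2 * ((g i ⬝ᵥ x) ^ 2 - s * ∑ k, x k ^ 2) +
      ∑ i, (truncDev d s τ (g i) * (g i ⬝ᵥ x) ^ 2 - E) +
      N * (E - 2 * s ^ 2 * ∑ k, x k ^ 2) +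
      (∑ i, v i ^ 2 + 2 * (N * s) - 3) * s * ∑ k, x k ^ 2 := by
  have h : x ⬝ᵥ restMat s v g *ᵥ x =
      ∑ i, (v i ^ 2 * (g i ⬝ᵥ x) ^ 2 + truncDev d s τ (g i) * (g i ⬝ᵥ x) ^ 2) -
        3 * s * ∑ k, x k ^ 2 := by
    rw [restMat, sub_mulVec, dotProduct_sub, sum_mulVec, dotProduct_sum, smul_mulVec, one_mulVec,
      dotProduct_smul, smul_eq_mul]
    congr 1
    · refine Finset.sum_congr rfl fun i _ => ?_
      rw [smul_mulVec, vecMulVec_mulVec, op_smul_eq_smul, dotProduct_smul, dotProduct_smul,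
        smul_eq_mul, smul_eq_mul, weight, truncDev, if_pos (hg i), dotProduct_comm x]
      ring
    · congr 1
      exact Finset.sum_congr rfl fun k _ => by ring
  rw [h, Finset.sum_add_distrib]
  simp only [mul_sub, Finset.sum_sub_distrib, ← Finset.sum_mul, Finset.sum_const,
    Finset.card_univ, Fintype.card_fin, nsmul_eq_mul]
  ring

lemma goodRows_of_test_vectors (hs : 0 < s) (hNs : (N : ℝ) * s = 1) (hd : d ≤ n) (hn : 1 ≤ n)
    {S₁ S₂ : Finset (Fin d → ℝ)} (h2 : ∀ x ∈ S₂, ∑ k, x k ^ 2 ≤ 1)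
    (hS1 : ∀ (b : Fin d → ℝ) t, (∀ x ∈ S₁, |b ⬝ᵥ x| ≤ t) → eucNorm b ≤ 2 * t)
    (hS2 : ∀ (A : Matrix (Fin d) (Fin d) ℝ) t, Aᵀ = A → (∀ x ∈ S₂, |x ⬝ᵥ A *ᵥ x| ≤ t) →
      ∀ z, eucNorm (A *ᵥ z) ≤ 8 * t * eucNorm z)
    (hτ : gaussVec d s {g | τ < |dev d s g|} ≤ s) {g : Fin N → Fin d → ℝ}
    (e0 : ∀ i, |dev d s (g i)| ≤ τ) (e1 : |∑ i, v i ^ 2 * dev d s (g i)| ≤ t)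
    (e2 : ∀ x ∈ S₁, |∑ i, v i ^ 3 * (g i ⬝ᵥ x)| ≤ t)
    (e3 : ∀ x ∈ S₁, |∑ i, v i * (truncDev d s τ (g i) * (g i ⬝ᵥ x))| ≤ t)
    (e4 : ∀ x ∈ S₂, |∑ i, v i ^ 2 * ((g i ⬝ᵥ x) ^ 2 - s * ∑ k, x k ^ 2)| ≤ t)
    (e5 : ∀ x ∈ S₂, |∑ i, (truncDev d s τ (g i) * (g i ⬝ᵥ x) ^ 2 -
        ∫ y, truncDev d s τ y * (y ⬝ᵥ x) ^ 2 ∂(gaussVec d s))| ≤ t)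
    (e6 : ∀ j, ∀ k < N, |g j ⬝ᵥ looMat s v g j ^ k *ᵥ looVec s v g j| ≤
      4 * √(L * s) * eucNorm (looMat s v g j ^ k *ᵥ looVec s v g j)) :
    GoodRows n s v L τ t g := by
  refine ⟨e0, e1, ?_, ?_, e6⟩
  · have := hS1 (crossVec s v g) (2 * t) fun x hx => by
      rw [crossVec_dotProduct g x e0]
      exact (abs_add_le _ _).trans (by linarith [e2 x hx, e3 x hx])
    linarith
  · refine hS2 _ _ (restMat_transpose g) fun x hx => ?_
    set E := ∫ y, truncDev d s τ y * (y ⬝ᵥ x) ^ 2 ∂(gaussVec d s)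
    rw [dotProduct_restMat_mulVec g x e0 E]
    have hE := abs_integral_truncDev_mul_sub_le (τ := τ) hs hd hn (h2 x hx) hτ
    have hX0 : 0 ≤ ∑ k, x k ^ 2 := by positivity
    have hX := h2 x hx
    set X := ∑ k, x k ^ 2
    have a1 : |(N : ℝ) * (E - 2 * (s : ℝ) ^ 2 * X)| ≤ 2 ^ 24 * (√(n : ℝ) * s * √(s : ℝ)) := by
      rw [abs_mul, Nat.abs_cast]
      refine (mul_le_mul_of_nonneg_left hE (Nat.cast_nonneg N)).trans (le_of_eq ?_)
      linear_combination (2 ^ 24 * √(n : ℝ) * s * √(s : ℝ)) * hNs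
    have a2 : |(∑ i, v i ^ 2 + 2 * ((N : ℝ) * s) - 3) * s * X| ≤ |∑ i, v i ^ 2 - 1| * s := by
      rw [hNs, abs_mul, abs_mul, abs_of_nonneg hX0, abs_of_nonneg s.coe_nonneg]
      have : ∑ i, v i ^ 2 + 2 * 1 - 3 = ∑ i, v i ^ 2 - 1 := by ring
      rw [this]
      exact mul_le_of_le_one_right (by positivity) hX
    refine (abs_add_le _ _).trans ?_
    have b1 := abs_add_le (∑ i, v i ^ 2 * ((g i ⬝ᵥ x) ^ 2 - s * X) +
      ∑ i, (truncDev d s τ (g i) * (g i ⬝ᵥ x) ^ 2 - E)) (N * (E - 2 * (s : ℝ) ^ 2 * X))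
    have b2 := abs_add_le (∑ i, v i ^ 2 * ((g i ⬝ᵥ x) ^ 2 - s * X))
      (∑ i, (truncDev d s τ (g i) * (g i ⬝ᵥ x) ^ 2 - E))
    have := e4 x hx
    have := e5 x hx
    linarith

lemma measure_biUnion_le_of_card {α ι : Type*} [MeasurableSpace α] (μ : Measure α) (S : Finset ι)
    {A : ι → Set α} {p q : ℝ} (hp : ∀ x ∈ S, μ (A x) ≤ ENNReal.ofReal p)
    (hq : S.card * p ≤ q) : μ (⋃ x ∈ S, A x) ≤ ENNReal.ofReal q := by
  refine (measure_biUnion_finset_le S A).trans ((Finset.sum_le_sum hp).trans ?_)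
  rw [Finset.sum_const, nsmul_eq_mul, ← ENNReal.ofReal_natCast, ← ENNReal.ofReal_mul (by positivity)]
  exact ENNReal.ofReal_le_ofReal hq

lemma pow_mul_exp_neg_le (hd : d ≤ n) : 25 ^ d * Real.exp (-(4 * (n + L))) ≤ Real.exp (-(4 * L)) := by
  have h1 : (25 : ℝ) ≤ Real.exp 4 := by
    have h := Real.add_one_le_exp (1 : ℝ)
    have e : Real.exp 4 = Real.exp 1 ^ 4 := by rw [← Real.exp_nat_mul]; norm_num
    have h3 := Real.exp_one_gt_d9
    rw [e]
    calc (25 : ℝ) ≤ 2.7 ^ 4 := by norm_num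
      _ ≤ _ := by gcongr; linarith
  have h2 : (25 : ℝ) ^ d ≤ Real.exp (4 * n) := by
    have h3 : (25 : ℝ) ^ d ≤ Real.exp 4 ^ n :=
      (pow_le_pow_left₀ (by norm_num) h1 d).trans
        (pow_le_pow_right₀ (Real.one_le_exp (by norm_num)) hd)
    rwa [← Real.exp_nat_mul, mul_comm] at h3
  calc (25 : ℝ) ^ d * Real.exp (-(4 * (n + L))) ≤
      Real.exp (4 * n) * Real.exp (-(4 * (n + L))) := by gcongr
    _ = Real.exp (-(4 * L)) := by rw [← Real.exp_add]; congr 1; ring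

lemma iidGaussVec_preimage_eval (i : Fin N) {A : Set (Fin d → ℝ)} (hA : MeasurableSet A) :
    iidGaussVec N d s {g | g i ∈ A} = gaussVec d s A :=
  (measurePreserving_eval (fun _ : Fin N => gaussVec d s) i).measure_preimage hA.nullMeasurableSet

lemma Scales.measure_not_goodRows_le (H : Scales N n s v L τ t) (hNs : (N : ℝ) * s = 1)
    (hd : d ≤ n) (hq : 2 * Real.exp (-(4 * L)) ≤ s) :
    iidGaussVec N d s {g | ¬ GoodRows n s v L τ t g} ≤
      ENNReal.ofReal ((N + N ^ 2 + 7) * (2 * Real.exp (-(4 * L)))) := by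
  obtain ⟨S₁, S₂, c1, c2, h1, h2, hS1, hS2⟩ := exists_test_vectors d
  set q := 2 * Real.exp (-(4 * L)) with hqdef
  set q' := 2 * Real.exp (-(4 * (n + L))) with hqdef'
  have hq0 : 0 ≤ q := by positivity
  have hq0' : 0 ≤ q' := by positivity
  have hqq : 25 ^ d * q' ≤ q := by
    have := pow_mul_exp_neg_le (L := L) hd
    rw [hqdef, hqdef']; linarith
  have c1' : S₁.card * q' ≤ q := by
    refine le_trans ?_ hqq
    have h : (S₁.card : ℝ) ≤ 5 ^ d := by exact_mod_cast c1
    have h' : (5 : ℝ) ^ d ≤ 25 ^ d := by gcongr; norm_num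
    exact mul_le_mul_of_nonneg_right (h.trans h') hq0'
  have c2' : S₂.card * q' ≤ 2 * q := by
    have h : (S₂.card : ℝ) ≤ 2 * 25 ^ d := by exact_mod_cast c2
    have := mul_le_mul_of_nonneg_right h hq0'
    linarith
  have hτ : gaussVec d s {g | τ < |dev d s g|} ≤ s := by
    have hle : {g : Fin d → ℝ | τ < |dev d s g|} ⊆ {g | τ ≤ |dev d s g|} := by
      intro g hg
      simp only [Set.mem_ofPred_eq] at hg ⊢
      exact hg.le
    refine (measure_mono hle).trans ((H.measure_dev hd).trans ?_)
    rw [← ENNReal.ofReal_coe_nnreal]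
    exact ENNReal.ofReal_le_ofReal hq
  set P := iidGaussVec N d s with hP
  set B0 : Set (Fin N → Fin d → ℝ) := ⋃ i ∈ Finset.univ, {g | τ ≤ |dev d s (g i)|}
  set B1 : Set (Fin N → Fin d → ℝ) := {g | t ≤ |∑ i, v i ^ 2 * dev d s (g i)|}
  set B2 : Set (Fin N → Fin d → ℝ) := ⋃ x ∈ S₁, {g | t ≤ |∑ i, v i ^ 3 * (g i ⬝ᵥ x)|}
  set B3 : Set (Fin N → Fin d → ℝ) :=
    ⋃ x ∈ S₁, {g | t ≤ |∑ i, v i * (truncDev d s τ (g i) * (g i ⬝ᵥ x))|}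
  set B4 : Set (Fin N → Fin d → ℝ) :=
    ⋃ x ∈ S₂, {g | t ≤ |∑ i, v i ^ 2 * ((g i ⬝ᵥ x) ^ 2 - s * ∑ k, x k ^ 2)|}
  set B5 : Set (Fin N → Fin d → ℝ) :=
    ⋃ x ∈ S₂, {g | t ≤ |∑ i, (truncDev d s τ (g i) * (g i ⬝ᵥ x) ^ 2 -
        ∫ y, truncDev d s τ y * (y ⬝ᵥ x) ^ 2 ∂(gaussVec d s))|}
  set B6 : Set (Fin N → Fin d → ℝ) := ⋃ p ∈ Finset.univ ×ˢ Finset.range N,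
    {g | 4 * √(L * s) * eucNorm (looMat s v g p.1 ^ p.2 *ᵥ looVec s v g p.1) <
      |g p.1 ⬝ᵥ looMat s v g p.1 ^ p.2 *ᵥ looVec s v g p.1|}
  have m0 : P B0 ≤ ENNReal.ofReal (N * q) := by
    refine measure_biUnion_le_of_card P _ (p := q) (fun i _ => ?_) (by simp)
    refine le_trans (le_of_eq ?_) (H.measure_dev hd)
    exact iidGaussVec_preimage_eval (A := {g | τ ≤ |dev d s g|}) i
      (measurableSet_le measurable_const (by fun_prop))
  have m1 : P B1 ≤ ENNReal.ofReal q := H.measure_sum_sq_mul_dev hd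
  have m2 : P B2 ≤ ENNReal.ofReal q :=
    measure_biUnion_le_of_card P _ (fun x hx => H.measure_sum_cube_mul (h1 x hx)) c1'
  have m3 : P B3 ≤ ENNReal.ofReal q :=
    measure_biUnion_le_of_card P _ (fun x hx => H.measure_sum_mul_truncDev hd (h1 x hx)) c1'
  have m4 : P B4 ≤ ENNReal.ofReal (2 * q) :=
    measure_biUnion_le_of_card P _ (fun x hx => H.measure_sum_sq_mul_sq_sub (h2 x hx)) c2'
  have m5 : P B5 ≤ ENNReal.ofReal (2 * q) :=
    measure_biUnion_le_of_card P _ (fun x hx => H.measure_sum_truncDev_mul_sq hd (h2 x hx)) c2'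
  have m6 : P B6 ≤ ENNReal.ofReal (N ^ 2 * q) :=
    measure_biUnion_le_of_card P _ (p := q)
      (fun p _ => measure_looVec_dotProduct_gt_le H.s_pos H.one_le_L p.1 p.2)
      (by simp [sq])
  have hsub : {g | ¬ GoodRows n s v L τ t g} ⊆ B0 ∪ B1 ∪ B2 ∪ B3 ∪ B4 ∪ B5 ∪ B6 := by
    intro g hg
    contrapose! hg
    simp only [Set.mem_union, not_or] at hg
    obtain ⟨⟨⟨⟨⟨⟨n0, n1⟩, n2⟩, n3⟩, n4⟩, n5⟩, n6⟩ := hg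
    simp only [B0, B1, B2, B3, B4, B5, B6, Set.mem_iUnion, Set.mem_ofPred_eq, not_exists, not_le,
      not_lt, Finset.mem_univ, Finset.mem_product, Finset.mem_range, true_and, forall_true_left,
      Prod.forall] at n0 n1 n2 n3 n4 n5 n6
    simp only [Set.mem_ofPred_eq, not_not]
    exact goodRows_of_test_vectors H.s_pos hNs hd H.one_le_n h2 hS1 hS2 hτ (fun i => (n0 i).le)
      n1.le (fun x hx => (n2 x hx).le) (fun x hx => (n3 x hx).le) (fun x hx => (n4 x hx).le)
      (fun x hx => (n5 x hx).le) n6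
  have hN2 : 0 ≤ (N : ℝ) ^ 2 * q := by positivity
  have hN1 : 0 ≤ (N : ℝ) * q := by positivity
  calc P {g | ¬ GoodRows n s v L τ t g} ≤ P (B0 ∪ B1 ∪ B2 ∪ B3 ∪ B4 ∪ B5 ∪ B6) := measure_mono hsub
    _ ≤ P B0 + P B1 + P B2 + P B3 + P B4 + P B5 + P B6 := by
      refine (measure_union_le _ _).trans (add_le_add_left ?_ _)
      refine (measure_union_le _ _).trans (add_le_add_left ?_ _)
      refine (measure_union_le _ _).trans (add_le_add_left ?_ _)
      refine (measure_union_le _ _).trans (add_le_add_left ?_ _)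
      refine (measure_union_le _ _).trans (add_le_add_left ?_ _)
      exact measure_union_le _ _
    _ ≤ ENNReal.ofReal (N * q) + ENNReal.ofReal q + ENNReal.ofReal q + ENNReal.ofReal q +
        ENNReal.ofReal (2 * q) + ENNReal.ofReal (2 * q) + ENNReal.ofReal (N ^ 2 * q) := by gcongr
    _ = ENNReal.ofReal ((N + N ^ 2 + 7) * q) := by
      rw [← ENNReal.ofReal_add, ← ENNReal.ofReal_add, ← ENNReal.ofReal_add, ← ENNReal.ofReal_add,
        ← ENNReal.ofReal_add, ← ENNReal.ofReal_add]
      · congr 1; ring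
      all_goals linarith

end

/-! ### Consequences of the definition of `η` -/

section
variable {N n d : ℕ} {s : NNReal} {v : Fin N → ℝ} {L η x y p M f₄ f₆ : ℝ}

/-- The lower bounds on `η` coming from its individual summands, where `x = √n`, `y = √L`,
`p = √s`, and `M`, `f₄`, `f₆` are the roots of the power sums of `v`. -/
structure EtaBounds (n : ℕ) (s : NNReal) (v : Fin N → ℝ) (L η x y p M f₄ f₆ : ℝ) : Prop where
  n_eq : (n : ℝ) = x ^ 2
  L_eq : L = y ^ 2
  s_eq : (s : ℝ) = p ^ 2
  one_le_x : 1 ≤ x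
  one_le_y : 1 ≤ y
  p_pos : 0 < p
  M_nonneg : 0 ≤ M
  four_nonneg : 0 ≤ f₄
  six_nonneg : 0 ≤ f₆
  sum_sq : ∑ i, v i ^ 2 = M ^ 2
  sum_four : ∑ i, v i ^ 4 = f₄ ^ 2
  sum_six : ∑ i, v i ^ 6 = f₆ ^ 2
  cube_le : y ^ 3 * p ≤ 1
  le_M : M * (x ^ 2 * y * p ^ 3) ≤ η
  le_one : x ^ 2 * y * p ^ 3 ≤ η
  le_four : f₄ * (x * y) * p ^ 2 ≤ η
  le_six : f₆ * (x + y) * p ≤ η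
  le_sup : ∀ i, v i ^ 2 * (x ^ 2 * y ^ 2 + y ^ 4) * p ^ 2 ≤ η
  le_cube : x ^ 3 * y ^ 3 * p ^ 4 ≤ η
  le_sub_one : |M ^ 2 - 1| * p ^ 2 ≤ η

lemma EtaBounds.eta_pos (H : EtaBounds n s v L η x y p M f₄ f₆) : 0 < η := by
  have h1 := H.one_le_x
  have h2 := H.one_le_y
  have h3 := H.p_pos
  exact lt_of_lt_of_le (by positivity) H.le_one

lemma EtaBounds.pow_four_le (H : EtaBounds n s v L η x y p M f₄ f₆) : y ^ 4 * p ^ 4 ≤ η := by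
  have h1 := H.one_le_x
  have h2 := H.one_le_y
  have h3 := H.p_pos
  refine le_trans ?_ H.le_one
  have h4 : 1 ≤ x ^ 2 := one_le_pow₀ h1
  calc y ^ 4 * p ^ 4 = (y ^ 3 * p) * (1 * (y * p ^ 3)) := by ring
    _ ≤ 1 * (x ^ 2 * (y * p ^ 3)) := by gcongr; exact H.cube_le
    _ = x ^ 2 * y * p ^ 3 := by ring

/-- The truncation level for the squared norms of the rows. -/
noncomputable def truncLevel (x y p : ℝ) : ℝ := 64 * (x * y + y ^ 2) * p ^ 2

lemma sq_add_sq_le (hx : 1 ≤ x) (hy : 1 ≤ y) : x ^ 2 + y ^ 2 ≤ 2 * (x ^ 2 * y ^ 2) := by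
  have h1 : 1 ≤ x ^ 2 := one_le_pow₀ hx
  have h2 : 1 ≤ y ^ 2 := one_le_pow₀ hy
  have := mul_nonneg (sub_nonneg.2 h1) (sub_nonneg.2 h2)
  have := mul_le_mul h1 h2 zero_le_one (by positivity)
  linarith

lemma EtaBounds.two_le (H : EtaBounds n s v L η x y p M f₄ f₆) :
    64 * (x ^ 2 + y ^ 2) * M ^ 2 * truncLevel x y p ^ 2 * p ^ 2 ≤ (2 ^ 16 * η) ^ 2 ∨
    2 ^ 28 * (x ^ 2 + y ^ 2) * x ^ 2 * M ^ 2 * (p ^ 2) ^ 3 ≤ (2 ^ 16 * η) ^ 2 ∧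
      ∀ i, 64 * (x ^ 2 + y ^ 2) * |v i| * truncLevel x y p * p ≤ 2 ^ 16 * η := by
  have h1 := H.one_le_x
  have h2 := H.one_le_y
  have h3 := H.p_pos
  have h4 := H.M_nonneg
  have hη := H.eta_pos
  have hsq : (M * (x ^ 2 * y * p ^ 3)) ^ 2 ≤ η ^ 2 := by
    gcongr
    exact H.le_M
  have hη2 : 0 ≤ η ^ 2 := by positivity
  rcases le_or_gt y x with hyx | hxy
  · left
    have e1 : x ^ 2 + y ^ 2 ≤ 2 * x ^ 2 := by
      have : y ^ 2 ≤ x ^ 2 := by gcongr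
      linarith
    have e2 : truncLevel x y p ≤ 128 * (x * y) * p ^ 2 := by
      unfold truncLevel
      have : x * y + y ^ 2 ≤ 2 * (x * y) := by
        rw [sq]
        have := mul_le_mul_of_nonneg_right hyx (zero_le_one.trans h2)
        linarith
      have := mul_le_mul_of_nonneg_right this (sq_nonneg p)
      linarith
    have e3 : 0 ≤ truncLevel x y p := by unfold truncLevel; positivity
    calc 64 * (x ^ 2 + y ^ 2) * M ^ 2 * truncLevel x y p ^ 2 * p ^ 2 ≤
        64 * (2 * x ^ 2) * M ^ 2 * (128 * (x * y) * p ^ 2) ^ 2 * p ^ 2 := by gcongr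
      _ = 2 ^ 21 * (M * (x ^ 2 * y * p ^ 3)) ^ 2 := by ring
      _ ≤ 2 ^ 21 * η ^ 2 := by gcongr
      _ ≤ (2 ^ 16 * η) ^ 2 := by rw [mul_pow]; gcongr; norm_num
  · right
    refine ⟨?_, fun i => ?_⟩
    · calc 2 ^ 28 * (x ^ 2 + y ^ 2) * x ^ 2 * M ^ 2 * (p ^ 2) ^ 3 ≤
          2 ^ 28 * (2 * (x ^ 2 * y ^ 2)) * x ^ 2 * M ^ 2 * (p ^ 2) ^ 3 := by
            gcongr; exact sq_add_sq_le h1 h2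
        _ = 2 ^ 29 * (M * (x ^ 2 * y * p ^ 3)) ^ 2 := by ring
        _ ≤ 2 ^ 29 * η ^ 2 := by gcongr
        _ ≤ (2 ^ 16 * η) ^ 2 := by rw [mul_pow]; gcongr; norm_num
    · have e1 : x ^ 2 + y ^ 2 ≤ 2 * y ^ 2 := by
        have : x ^ 2 ≤ y ^ 2 := by gcongr
        linarith
      have e2 : truncLevel x y p ≤ 64 * (y * y + y ^ 2) * p ^ 2 := by
        unfold truncLevel; gcongr
      have e3 : 0 ≤ truncLevel x y p := by unfold truncLevel; positivity
      have e4 : v i ^ 2 * y ^ 4 * p ^ 2 ≤ η := by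
        refine le_trans ?_ (H.le_sup i)
        gcongr
        have : 0 ≤ x ^ 2 * y ^ 2 := by positivity
        linarith
      have e5 := mul_nonneg (show 0 ≤ y ^ 4 * p ^ 2 by positivity) (sq_nonneg (|v i| - p))
      rw [sub_sq, sq_abs] at e5
      have e6 := H.pow_four_le
      calc 64 * (x ^ 2 + y ^ 2) * |v i| * truncLevel x y p * p ≤
          64 * (2 * y ^ 2) * |v i| * (64 * (y * y + y ^ 2) * p ^ 2) * p := by gcongr
        _ = 2 ^ 14 * (|v i| * y ^ 4 * p ^ 3) := by ring
        _ ≤ 2 ^ 16 * η := by linarith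

lemma EtaBounds.scales (H : EtaBounds n s v L η x y p M f₄ f₆) (hn : 1 ≤ n)
    (hNs : (N : ℝ) * s = 1) : Scales N n s v L (truncLevel x y p) (2 ^ 16 * η) := by
  have h1 := H.one_le_x
  have h2 := H.one_le_y
  have h3 := H.p_pos
  have hη := H.eta_pos
  have hη2 : 0 ≤ η ^ 2 := by positivity
  have hxy := sq_add_sq_le h1 h2
  have hsqrt : √(s : ℝ) = p := by rw [H.s_eq, Real.sqrt_sq h3.le]
  have hone : ∀ c : ℝ, 0 ≤ c → c ≤ 2 ^ 32 → c * η ^ 2 ≤ (2 ^ 16 * η) ^ 2 := fun c _ hc => by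
    rw [mul_pow]; gcongr; linarith
  have hN4 : (N : ℝ) * (s : ℝ) ^ 4 = p ^ 6 := by
    rw [show (N : ℝ) * (s : ℝ) ^ 4 = (N * s) * (s : ℝ) ^ 3 by ring, hNs, H.s_eq]; ring
  refine ⟨?_, hn, ?_, by positivity, ?_, ?_, ?_, fun i => ?_, ?_, ?_, ?_, ?_, ?_⟩
  · have : (0 : ℝ) < s := by rw [H.s_eq]; positivity
    exact_mod_cast this
  · rw [H.L_eq]; exact one_le_pow₀ h2
  · unfold truncLevel; positivity
  · rw [H.n_eq, H.L_eq, H.s_eq, truncLevel]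
    calc 4096 * x ^ 2 * y ^ 2 * (p ^ 2) ^ 2 = (64 * (x * y) * p ^ 2) ^ 2 := by ring
      _ ≤ _ := by gcongr; linarith [sq_nonneg y]
  · rw [H.L_eq, H.s_eq, truncLevel]
    gcongr
    have : 0 ≤ x * y := by positivity
    linarith
  · rw [H.n_eq, H.L_eq, H.s_eq]
    have := H.le_sup i
    have e0 : 0 ≤ v i ^ 2 * p ^ 2 := by positivity
    have e1 := mul_le_mul_of_nonneg_right hxy e0
    have e2 : 0 ≤ v i ^ 2 * p ^ 2 * y ^ 4 := by positivity
    linarith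
  · rw [H.n_eq, H.L_eq, H.s_eq, H.sum_four]
    have h4 := H.four_nonneg
    calc 2 ^ 13 * (x ^ 2 * y ^ 2) * f₄ ^ 2 * (p ^ 2) ^ 2 = 2 ^ 13 * (f₄ * (x * y) * p ^ 2) ^ 2 := by
          ring
      _ ≤ 2 ^ 13 * η ^ 2 := by gcongr; exact H.le_four
      _ ≤ _ := hone _ (by norm_num) (by norm_num)
  · rw [H.n_eq, H.L_eq, H.s_eq, H.sum_six]
    have h4 := H.six_nonneg
    calc 8 * (x ^ 2 + y ^ 2) * f₆ ^ 2 * p ^ 2 ≤ 8 * (x + y) ^ 2 * f₆ ^ 2 * p ^ 2 := by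
          gcongr
          have : 0 ≤ x * y := by positivity
          linarith
      _ = 8 * (f₆ * (x + y) * p) ^ 2 := by ring
      _ ≤ 8 * η ^ 2 := by gcongr; exact H.le_six
      _ ≤ _ := hone _ (by norm_num) (by norm_num)
  · rw [hsqrt, H.n_eq, H.L_eq, H.s_eq, H.sum_sq]
    exact H.two_le
  · rw [mul_assoc _ (N : ℝ), hN4, H.n_eq, H.L_eq]
    calc 2 ^ 28 * (x ^ 2 + y ^ 2) * x ^ 2 * p ^ 6 ≤ 2 ^ 28 * (2 * (x ^ 2 * y ^ 2)) * x ^ 2 * p ^ 6 := by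
          gcongr
      _ = 2 ^ 29 * (x ^ 2 * y * p ^ 3) ^ 2 := by ring
      _ ≤ 2 ^ 29 * η ^ 2 := by gcongr; exact H.le_one
      _ ≤ _ := hone _ (by norm_num) (by norm_num)
  · rw [H.n_eq, H.L_eq, H.s_eq, truncLevel]
    have e1 : (x ^ 2 + y ^ 2) * (x * y + y ^ 2) ≤ 3 * (x ^ 3 * y ^ 3) + y ^ 4 := by
      have a1 : x ^ 3 * y ≤ x ^ 3 * y ^ 3 := by gcongr; exact le_self_pow₀ h2 (by norm_num)
      have a2 : x ^ 2 * y ^ 2 ≤ x ^ 3 * y ^ 3 := by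
        gcongr <;> norm_num
      have a3 : x * y ^ 3 ≤ x ^ 3 * y ^ 3 := by gcongr; exact le_self_pow₀ h1 (by norm_num)
      linarith
    have e2 := mul_le_mul_of_nonneg_right e1 (show 0 ≤ p ^ 4 by positivity)
    have := H.le_cube
    have := H.pow_four_le
    linarith

lemma EtaBounds.sq_add_mul_le (H : EtaBounds n s v L η x y p M f₄ f₆) (i : Fin N) :
    (v i ^ 2 + truncLevel x y p) * (x ^ 2 * p ^ 2 + truncLevel x y p) ≤ 2 ^ 15 * η := by
  have h1 := H.one_le_x
  have h2 := H.one_le_y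
  have h3 := H.p_pos
  have b1 : x * y ≤ x ^ 2 * y ^ 2 := by
    rw [← mul_pow]; exact le_self_pow₀ (by nlinarith) (by norm_num)
  have b2 : y ^ 2 ≤ x ^ 2 * y ^ 2 := le_mul_of_one_le_left (by positivity) (one_le_pow₀ h1)
  have b2' : x ^ 2 ≤ x ^ 2 * y ^ 2 := le_mul_of_one_le_right (by positivity) (one_le_pow₀ h2)
  have b3 : x ^ 2 * y ^ 2 ≤ x ^ 3 * y ^ 3 := by gcongr <;> norm_num
  have b4 : x ^ 3 * y ≤ x ^ 3 * y ^ 3 := by gcongr; exact le_self_pow₀ h2 (by norm_num)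
  have b5 : (x * y + y ^ 2) ^ 2 ≤ 2 * (x ^ 2 * y ^ 2 + y ^ 4) := by
    nlinarith [sq_nonneg (x * y - y ^ 2)]
  have hv : 0 ≤ v i ^ 2 * p ^ 2 := by positivity
  have hp4 : 0 ≤ p ^ 4 := by positivity
  have c1 := mul_le_mul_of_nonneg_left b1 hv
  have c2 := mul_le_mul_of_nonneg_left b2 hv
  have c2' := mul_le_mul_of_nonneg_left b2' hv
  have c3 := mul_le_mul_of_nonneg_left b3 hp4
  have c4 := mul_le_mul_of_nonneg_left b4 hp4
  have c5 := mul_le_mul_of_nonneg_left b5 hp4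
  have c6 : 0 ≤ v i ^ 2 * p ^ 2 * y ^ 4 := by positivity
  have c7 := H.le_sup i
  have c8 := H.le_cube
  have c9 := H.pow_four_le
  have c10 := H.eta_pos
  unfold truncLevel
  linarith

lemma EtaBounds.le_radius (H : EtaBounds n s v L η x y p M f₄ f₆) {G : ℝ}
    (hG : G ^ 2 ≤ x ^ 2 * p ^ 2 + truncLevel x y p) : G ≤ 10 * (x + y) * p := by
  have h1 := H.one_le_x
  have h2 := H.one_le_y
  have h3 := H.p_pos
  refine le_of_sq_le_sq ?_ (by positivity)
  refine hG.trans ?_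
  unfold truncLevel
  have : (x ^ 2 + 64 * (x * y + y ^ 2)) * p ^ 2 ≤ (100 * (x + y) ^ 2) * p ^ 2 := by
    gcongr
    nlinarith [mul_pos (zero_lt_one.trans_le h1) (zero_lt_one.trans_le h2)]
  linarith

end

section
variable {N n d : ℕ} {s : NNReal} {v : Fin N → ℝ} {L η x y p M f₄ f₆ : ℝ}

lemma ten_mul_succ_le_four_pow {N : ℕ} (hN : 2 ≤ N) : (10 * (N + 1) : ℝ) ≤ 4 * 4 ^ N := by
  induction N, hN using Nat.le_induction with
  | base => norm_num
  | succ N hN ih =>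
    rw [pow_succ]; push_cast
    have : (2 : ℝ) ≤ N := by exact_mod_cast hN
    linarith

/-- On the good event, the leading eigenvector is entrywise accurate. -/
lemma EtaBounds.entrywise_bound (H : EtaBounds (d + 1) s v L η x y p M f₄ f₆)
    (hs : (s : ℝ) = (N : ℝ)⁻¹) (hN : 2 ≤ N) (hd : d + 1 ≤ N) {g : Fin N → Fin d → ℝ}
    (hg : GoodRows (d + 1) s v L (truncLevel x y p) (2 ^ 16 * η) g)
    (hβ : 64 * (2 ^ 28 * η) ≤ |∑ i, v i ^ 4 - 3 * (N : ℝ)⁻¹|) {u : Fin (d + 1) → ℝ}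
    (hu : IsLeadingEigen (specMat (gaussBasis (n := d + 1) v g)) u) :
    ∃ σ : ℝ, (σ = 1 ∨ σ = -1) ∧ ∀ j : Fin N,
      |∑ i, v i ^ 4 - 3 * (N : ℝ)⁻¹| * |σ * (gaussBasis (n := d + 1) v g *ᵥ u) j - v j| ≤
        20 * (2 ^ 28 * η) * (|v j| + 4 * (y * p)) := by
  have h1 := H.one_le_x
  have h2 := H.one_le_y
  have h3 := H.p_pos
  have hη := H.eta_pos
  have hsqrt : √(s : ℝ) = p := by rw [H.s_eq, Real.sqrt_sq h3.le]
  have hsqrtL : √(L * s) = y * p := by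
    rw [H.L_eq, H.s_eq, ← mul_pow, Real.sqrt_sq (by positivity)]
  have hsqrtn : √((d + 1 : ℕ) : ℝ) = x := by rw [H.n_eq, Real.sqrt_sq (by linarith)]
  have hτ0 : 0 ≤ truncLevel x y p := by unfold truncLevel; positivity
  have hG : ∀ j, eucNorm (g j) ^ 2 ≤ x ^ 2 * p ^ 2 + truncLevel x y p := fun j => by
    have a1 := (abs_le.1 (hg.abs_dev_le j)).2
    have a2 : (d : ℝ) ≤ x ^ 2 := by rw [← H.n_eq]; push_cast; linarith
    have a3 := mul_le_mul_of_nonneg_right a2 (sq_nonneg p)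
    rw [dev, H.s_eq] at a1
    rw [eucNorm_sq]
    linarith
  have hw : ∀ j, |weight s (v j) (g j)| ≤ v j ^ 2 + truncLevel x y p := fun j => by
    rw [weight]
    refine (abs_add_le _ _).trans ?_
    rw [abs_of_nonneg (sq_nonneg (v j))]
    linarith [hg.abs_dev_le j]
  have hsum : ∑ i, weight s (v i) (g i) * v i ^ 2 =
      ∑ i, v i ^ 4 + ∑ i, v i ^ 2 * dev d s (g i) := by
    rw [← Finset.sum_add_distrib]
    exact Finset.sum_congr rfl fun i _ => by rw [weight]; ring
  refine GaussBasis.entrywise_bound (β := ∑ i, v i ^ 4 - 3 * (N : ℝ)⁻¹) (ε := 2 ^ 28 * η)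
    (κ := 4 * (y * p)) (by positivity) hβ ?_ ?_ ?_ ?_ ?_ ?_ ?_ hu
  · rw [← hs, hsum]
    refine le_trans (le_of_eq ?_) (hg.diag_le.trans (by linarith))
    congr 1; ring
  · rw [← hs]
    exact hg.cross_le.trans (by linarith)
  · intro z
    rw [← hs]
    refine (hg.rest_le z).trans (mul_le_mul_of_nonneg_right ?_ (eucNorm_nonneg z))
    rw [hsqrt, hsqrtn, H.s_eq, H.sum_sq]
    have b1 : x * p ^ 3 ≤ x ^ 2 * y * p ^ 3 := by
      have : x * 1 ≤ x ^ 2 * y := by gcongr; exact le_self_pow₀ h1 (by norm_num)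
      have := mul_le_mul_of_nonneg_right this (show 0 ≤ p ^ 3 by positivity)
      linarith
    have b2 := H.le_one
    have b3 := H.le_sub_one
    linarith
  · intro j
    rw [← hs]
    refine (mul_le_mul (hw j) (hG j) (sq_nonneg _) (by positivity)).trans ?_
    exact (H.sq_add_mul_le j).trans (by linarith)
  · intro j
    rw [← hs, abs_mul]
    have hG0 := eucNorm_nonneg (g j)
    have c1 := H.le_radius (hG j)
    have c2 : |v j| ^ 3 ≤ f₆ := by
      refine le_of_sq_le_sq ?_ H.six_nonneg
      rw [← H.sum_six, ← pow_mul]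
      refine le_trans (le_of_eq ?_)
        (Finset.single_le_sum (f := fun i => v i ^ 6) (fun i _ => by positivity) (Finset.mem_univ j))
      exact Even.pow_abs (by decide) _
    have c3 : |v j| ^ 3 * eucNorm (g j) ≤ 10 * η := by
      refine (mul_le_mul c2 c1 hG0 H.six_nonneg).trans ?_
      linarith [H.le_six]
    have c4 := mul_le_mul_of_nonneg_right (hw j) (show 0 ≤ |v j| * eucNorm (g j) by positivity)
    have c5 := H.sq_add_mul_le j
    have c6 := sq_nonneg (|v j| * eucNorm (g j) - truncLevel x y p)
    rw [sub_sq, mul_pow, sq_abs] at c6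
    have c7 := mul_le_mul_of_nonneg_left (hG j) (sq_nonneg (v j))
    have c8 : 0 ≤ truncLevel x y p * (x ^ 2 * p ^ 2) := by positivity
    have c9 : v j ^ 2 * (|v j| * eucNorm (g j)) = |v j| ^ 3 * eucNorm (g j) := by
      rw [← sq_abs (v j)]; ring
    nlinarith
  · intro j k hk
    rw [← hs, ← hsqrtL]
    exact hg.loo_le j k hk
  · intro j
    refine (H.le_radius (hG j)).trans ?_
    have d1 : x ≤ N := by
      have : x ^ 2 ≤ N := by rw [← H.n_eq]; exact_mod_cast hd
      exact (le_self_pow₀ h1 (by norm_num)).trans this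
    have d2 : 10 * (x + y) ≤ 10 * (N + 1) * y := by nlinarith [Nat.cast_nonneg (α := ℝ) N]
    have d3 := mul_le_mul_of_nonneg_right (ten_mul_succ_le_four_pow hN) (zero_le_one.trans h2)
    have d4 := mul_le_mul_of_nonneg_right (d2.trans d3) h3.le
    linarith

lemma lpNorm_pow {k m : ℕ} (hm : m ≠ 0) (v : Fin k → ℝ) : lpNorm (m : ℝ) v ^ m = ∑ i, |v i| ^ m := by
  unfold _root_.lpNorm
  simp only [Real.rpow_natCast, one_div]
  exact Real.rpow_inv_natCast_pow (by positivity) hm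

lemma lpNorm_nonneg {k : ℕ} (q : ℝ) (v : Fin k → ℝ) : 0 ≤ lpNorm q v := by
  unfold _root_.lpNorm
  positivity

lemma lpNorm_four_pow {k : ℕ} (v : Fin k → ℝ) : lpNorm 4 v ^ 4 = ∑ i, v i ^ 4 := by
  have h := lpNorm_pow (m := 4) (by norm_num) v
  simp only [Even.pow_abs (show Even 4 by decide)] at h
  exact_mod_cast h

lemma lpNorm_six_pow {k : ℕ} (v : Fin k → ℝ) : lpNorm 6 v ^ 6 = ∑ i, v i ^ 6 := by
  have h := lpNorm_pow (m := 6) (by norm_num) v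
  simp only [Even.pow_abs (show Even 6 by decide)] at h
  exact_mod_cast h

lemma sq_le_supNorm_sq {k : ℕ} (v : Fin k → ℝ) (i : Fin k) : v i ^ 2 ≤ supNorm v ^ 2 := by
  rw [← sq_abs]
  gcongr
  exact le_ciSup (f := fun i => |v i|) (Set.finite_range _).bddAbove i

lemma rpow_three_halves {a : ℝ} (ha : 0 ≤ a) : a ^ ((3 : ℝ) / 2) = √a ^ 3 := by
  rw [Real.sqrt_eq_rpow, ← Real.rpow_natCast, ← Real.rpow_mul ha]
  norm_num

lemma etaBound_eq {N n : ℕ} (C : ℝ) (v : Fin N → ℝ) {δ L : ℝ} (hL : Real.log (N / δ) = L)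
    (hL0 : 0 ≤ L) : etaBound C N n v δ = C * (
      (eucNorm v + 1) * (√n ^ 2 * √L * (√N)⁻¹ ^ 3) +
      lpNorm 4 v ^ 2 * (√n * √L) * (√N)⁻¹ ^ 2 +
      lpNorm 6 v ^ 3 * (√n + √L) * (√N)⁻¹ +
      supNorm v ^ 2 * (√n ^ 2 * √L ^ 2 + √L ^ 4) * (√N)⁻¹ ^ 2 +
      √n ^ 3 * √L ^ 3 * (√N)⁻¹ ^ 4 +
      |eucNorm v ^ 2 - 1| * (√N)⁻¹ ^ 2) := by
  have h1 : √(n : ℝ) ^ 2 = n := Real.sq_sqrt (by positivity)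
  have h2 : √L ^ 2 = L := Real.sq_sqrt hL0
  have h4 : √L ^ 4 = L ^ 2 := by rw [show √L ^ 4 = (√L ^ 2) ^ 2 by ring, h2]
  have h3 : ((√(N : ℝ))⁻¹) ^ 2 = (N : ℝ)⁻¹ := by rw [inv_pow, Real.sq_sqrt (by positivity)]
  have h5 : ((√(N : ℝ))⁻¹) ^ 4 = ((N : ℝ) ^ 2)⁻¹ := by
    rw [← inv_pow, ← h3]; ring
  unfold etaBound
  rw [hL, rpow_three_halves (by positivity), rpow_three_halves (by positivity),
    Real.sqrt_mul (by positivity), h4, h5, h3, h2, h1]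
  simp only [div_eq_mul_inv, mul_pow, inv_pow]
  ring

lemma etaBounds_etaBound {N n : ℕ} (v : Fin N → ℝ) {δ L : ℝ} (hN : 1 ≤ N) (hn : 1 ≤ n)
    (hL : Real.log (N / δ) = L) (hL1 : 1 ≤ L) (hL7 : L ^ 7 ≤ N) :
    EtaBounds n ((N : NNReal))⁻¹ v L (etaBound 1 N n v δ) √n √L (√N)⁻¹ (eucNorm v)
      (lpNorm 4 v ^ 2) (lpNorm 6 v ^ 3) := by
  have hL0 : 0 ≤ L := by linarith
  have hN' : (1 : ℝ) ≤ N := by exact_mod_cast hN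
  have hn' : (1 : ℝ) ≤ n := by exact_mod_cast hn
  have hx : 1 ≤ √(n : ℝ) := Real.one_le_sqrt.2 hn'
  have hy : 1 ≤ √L := Real.one_le_sqrt.2 hL1
  have hp : 0 < (√(N : ℝ))⁻¹ := inv_pos.2 (Real.sqrt_pos.2 (by linarith))
  have hM := eucNorm_nonneg v
  have h4 := lpNorm_nonneg 4 v
  have h6 := lpNorm_nonneg 6 v
  rw [etaBound_eq 1 v hL hL0, one_mul]
  have e1 : 0 ≤ eucNorm v * (√n ^ 2 * √L * (√N)⁻¹ ^ 3) := by positivity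
  have e1' : 0 ≤ √n ^ 2 * √L * (√(N : ℝ))⁻¹ ^ 3 := by positivity
  have e2 : 0 ≤ lpNorm 4 v ^ 2 * (√n * √L) * (√(N : ℝ))⁻¹ ^ 2 := by positivity
  have e3 : 0 ≤ lpNorm 6 v ^ 3 * (√n + √L) * (√(N : ℝ))⁻¹ := by positivity
  have e4 : 0 ≤ supNorm v ^ 2 * (√n ^ 2 * √L ^ 2 + √L ^ 4) * (√(N : ℝ))⁻¹ ^ 2 := by positivity
  have e5 : 0 ≤ √n ^ 3 * √L ^ 3 * (√(N : ℝ))⁻¹ ^ 4 := by positivity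
  have e6 : 0 ≤ |eucNorm v ^ 2 - 1| * (√(N : ℝ))⁻¹ ^ 2 := by positivity
  refine ⟨(Real.sq_sqrt (by positivity)).symm, (Real.sq_sqrt hL0).symm, ?_, hx, hy, hp, hM,
    by positivity, by positivity, (eucNorm_sq v).symm, ?_, ?_, ?_, by linarith, by linarith,
    by linarith, by linarith, fun i => ?_, by linarith, by linarith⟩
  · rw [inv_pow, Real.sq_sqrt (by positivity)]; simp
  · rw [← pow_mul, lpNorm_four_pow]
  · rw [← pow_mul, lpNorm_six_pow]
  · rw [← div_eq_mul_inv, div_le_one (inv_pos.1 hp)]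
    refine Real.le_sqrt_of_sq_le (le_trans ?_ hL7)
    calc (√L ^ 3) ^ 2 = (√L ^ 2) ^ 3 := by ring
      _ = L ^ 3 := by rw [Real.sq_sqrt hL0]
      _ ≤ L ^ 7 := pow_le_pow_right₀ hL1 (by norm_num)
  · have := mul_le_mul_of_nonneg_right (sq_le_supNorm_sq v i)
      (show 0 ≤ (√n ^ 2 * √L ^ 2 + √L ^ 4) * (√(N : ℝ))⁻¹ ^ 2 by positivity)
    linarith

end

end GaussBasis

open GaussBasis

/-- entrywise error bound for the spectral estimator, Gaussian basis: in the
Gaussian-basis model `Ỹ = YQ`, with `M̃` the spectral matrix of `Ỹ` and `ũ` its unit leading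
eigenvector, there are a universal constant `C₀ > 0` (defining `η`), universal constants
`c > 0`, `C > 0`, and an absolute constant `N₀`, such that for any `δ ∈ (0,1)` with
`N ≥ log⁷(N/δ)` and `η ≤ c |‖v‖₄⁴ - 3/N|`, with probability at least `1 - δ`, there is a
single sign `s ∈ {±1}` with, for all `j ∈ [N]`,
`|‖v‖₄⁴ - 3/N| · |s ỹ_jᵀũ - v_j| ≤ C η (|v_j| + √(log(N/δ))/√N)`. -/
theorem stmt_7 :
    ∃ C₀ : ℝ, 0 < C₀ ∧ ∃ c : ℝ, 0 < c ∧ ∃ C : ℝ, 0 < C ∧ ∃ N₀ : ℕ,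
      ∀ (N n : ℕ) (v : Fin N → ℝ) (δ : ℝ), N₀ ≤ N → 1 ≤ n → n ≤ N → 0 < δ → δ < 1 →
        (Real.log (N / δ)) ^ 7 ≤ N →
        etaBound C₀ N n v δ ≤ c * |lpNorm 4 v ^ 4 - 3 / N| →
        ∀ Q : Matrix (Fin n) (Fin n) ℝ, Qᵀ * Q = 1 →
        ENNReal.ofReal (1 - δ) ≤
          (iidGaussVec N (n - 1) ((N : NNReal))⁻¹)
            {B | ∀ u : Fin n → ℝ, IsLeadingEigen (specMat (gaussBasis v B * Q)) u →
              ∃ s : ℝ, (s = 1 ∨ s = -1) ∧ ∀ j : Fin N,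
                |lpNorm 4 v ^ 4 - 3 / N|
                    * |s * (gaussBasis v B * Q).mulVec u j - v j|
                  ≤ C * etaBound C₀ N n v δ
                      * (|v j| + Real.sqrt (Real.log (N / δ)) / Real.sqrt N)} := by
  refine ⟨1, one_pos, (64 * 2 ^ 28)⁻¹, by positivity, 80 * 2 ^ 28, by positivity, 5, ?_⟩
  intro N n v δ hN hn hnN hδ hδ1 hL7 hη Q hQ
  obtain ⟨d, rfl⟩ : ∃ d, n = d + 1 := ⟨n - 1, by omega⟩
  have hN5 : (5 : ℝ) ≤ N := by exact_mod_cast hN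
  have hN0 : (0 : ℝ) < N := by linarith
  set L := Real.log (N / δ) with hLdef
  have hNδ : (N : ℝ) ≤ N / δ := by rw [le_div_iff₀ hδ]; nlinarith
  have hL1 : 1 ≤ L := by
    rw [hLdef, Real.le_log_iff_exp_le (by positivity)]
    have := Real.exp_one_lt_d9
    linarith
  have H := etaBounds_etaBound v (by omega : 1 ≤ N) hn hLdef.symm hL1 hL7
  set η := etaBound 1 N (d + 1) v δ with hηdef
  have hη0 := H.eta_pos
  have hs : (((N : NNReal)⁻¹ : NNReal) : ℝ) = (N : ℝ)⁻¹ := by simp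
  have hNs : (N : ℝ) * (((N : NNReal)⁻¹ : NNReal) : ℝ) = 1 := by
    rw [hs, mul_inv_cancel₀ hN0.ne']
  have hexp : Real.exp (-(4 * L)) = (δ / N) ^ 4 := by
    have : -(4 * L) = (4 : ℕ) * Real.log (δ / N) := by
      rw [hLdef, ← inv_div, Real.log_inv]; push_cast; ring
    rw [this, Real.exp_nat_mul, Real.exp_log (by positivity)]
  have hδ4 : δ ^ 4 ≤ δ := pow_le_of_le_one hδ.le hδ1.le (by norm_num)
  have hq : 2 * Real.exp (-(4 * L)) ≤ (((N : NNReal)⁻¹ : NNReal) : ℝ) := by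
    rw [hexp, hs, div_pow, inv_eq_one_div, mul_div_assoc', div_le_div_iff₀ (by positivity) hN0]
    have h3 : (2 : ℝ) ≤ N ^ 3 := by nlinarith [sq_nonneg (N : ℝ)]
    have h4 := mul_le_mul_of_nonneg_right (h3.trans' (by linarith : 2 * δ ^ 4 ≤ 2)) hN0.le
    linarith
  have hbad := (H.scales hn hNs).measure_not_goodRows_le hNs (Nat.le_succ d) hq
  have hbad' : iidGaussVec N d ((N : NNReal))⁻¹ {g | ¬ GoodRows (d + 1) ((N : NNReal))⁻¹ v L
      (truncLevel √(d + 1 : ℕ) √L (√N)⁻¹) (2 ^ 16 * η) g} ≤ ENNReal.ofReal δ := by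
    refine hbad.trans (ENNReal.ofReal_le_ofReal ?_)
    rw [hexp, div_pow, mul_div_assoc', mul_div_assoc', div_le_iff₀ (by positivity)]
    have h1 : ((N : ℝ) + N ^ 2 + 7) * 2 ≤ N ^ 4 := by
      have h2 : (25 : ℝ) ≤ N ^ 2 := by nlinarith
      have h3 := mul_le_mul_of_nonneg_right h2 (sq_nonneg (N : ℝ))
      nlinarith
    have h2 := mul_le_mul h1 hδ4 (by positivity) (by positivity)
    linarith
  have hβ : 64 * (2 ^ 28 * η) ≤ |∑ i, v i ^ 4 - 3 * (N : ℝ)⁻¹| := by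
    rw [lpNorm_four_pow, div_eq_mul_inv, inv_mul_eq_div, le_div_iff₀ (by positivity)] at hη
    linarith
  refine le_trans ?_ (measure_mono (s := {g | GoodRows (d + 1) ((N : NNReal))⁻¹ v L
      (truncLevel √(d + 1 : ℕ) √L (√N)⁻¹) (2 ^ 16 * η) g}) ?_)
  · rw [ENNReal.ofReal_sub _ hδ.le, ENNReal.ofReal_one, tsub_le_iff_right]
    refine le_trans ?_ (add_le_add_right hbad' _)
    have : IsProbabilityMeasure (iidGaussVec N d ((N : NNReal))⁻¹) := by
      unfold iidGaussVec; infer_instance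
    rw [← measure_univ (μ := iidGaussVec N d ((N : NNReal))⁻¹)]
    refine le_trans (measure_mono fun g _ => ?_) (measure_union_le _ _)
    exact Classical.em _
  · intro g hg
    simp only [Set.mem_ofPred_eq] at hg ⊢
    intro u hu
    obtain ⟨σ, hσ, hj⟩ := H.entrywise_bound hs (by omega) hnN hg hβ (hu.of_mul_orthogonal hQ)
    refine ⟨σ, hσ, fun j => ?_⟩
    have h := hj j
    rw [mulVec_mulVec] at h
    rw [lpNorm_four_pow, div_eq_mul_inv]
    refine h.trans ?_
    rw [div_eq_mul_inv √L]
    have : 0 ≤ 2 ^ 28 * η * |v j| := by positivity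
    linarith
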